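/- arXiv:2205.00464 — 4 statements merged into one kernel-verified Lean document; each statement's English description precedes it below -/
import Mathlib

section
/- For every integer r ≥ 3, there do not exist complex numbers x₁,…,x_{r+1} and pairwise distinct complex numbers z₁,…,z_{r+1}, each with rational real and imaginary parts, such that ∑_{i=1}^{r+1} x_i·z_i^j = (−2)^j/(j+1)! for every integer j with 0 ≤ j ≤ 2r. (Equivalently: there is no quadrature formula of degree 2r for the Bessel weight with r+1 nodes on ℚ(√−1).) -/
/-!
Put `m = r + 1`, and let `y_n(z) = ∑ Y(n, k) z ^ k` be the Bessel polynomials, with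
`Y(n, k) = (n + k).choose (2 k) * (2 k - 1)‼`. A node polynomial `F` of a quadrature formula of
degree `2 r` with `m` nodes is orthogonal to `1, …, z ^ (r - 1)`, so `F = a y_m + b y_r` for some
`a, b` (`quasi_orthogonal`). If the nodes lie in `ℚ(i)`, then `F` may be taken to be a product of
linear factors `α z - β` over `ℤ[i]` that are primitive at a chosen Gaussian prime `π`. This is
impossible by a Newton polygon argument at `π`.

Choose an odd prime `q ∤ m` and a number `s` such that `q` divides the `s` top coefficients (degrees
`m, …, m - s + 1`) of both `y_m` and `y_r`, while `q ^ (s - 1)` does not divide `(2 m - 1)‼`. Such a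
pair exists for every `m ≥ 4` by Bertrand's postulate (`exists_good_prime`). Let `π` divide `q`.
Scale `F` by a nonzero constant to `G = A y_m + B y_r` with `A, B` in `ℤ[i]` not both divisible by
`π`. The coefficients of degree `0` and `1` and `q ∤ m` show that `G` is primitive at `π`, so `F`
and `G` have the same valuations. The top `s` coefficients are divisible by `π`, so at least `s`
of the `α` are, and therefore `π ^ s` divides the leading coefficient of `G` and `π ^ (s - 1)` the
next one (`newton_linear_prod`). These coefficients are `A (2 m - 1)‼` and
`A (2 m - 1)‼ + B (2 m - 3)‼`. As `q` is unramified in `ℤ[i]` (`gaussian_unramified`), both `A` and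
`B` are divisible by `π`, a contradiction (`no_split_combination`).
-/

/-! ### Bessel polynomials and orthogonality -/

open Nat in
/-- The coefficient of `z ^ k` in the Bessel polynomial
`y_n(z) = ∑ (n + k)! / ((n - k)! k!) (z / 2) ^ k`, written as an integer. It vanishes for
`k > n`, and `(2 * 0 - 1)‼ = 0‼ = 1` is the value needed at `k = 0`. -/
def besselCoeff (n k : ℕ) : ℕ := (n + k).choose (2 * k) * (2 * k - 1)‼

/-- The Bessel moment sequence. -/
noncomputable def besselMoment (j : ℕ) : ℂ := (-2 : ℂ) ^ j / (Nat.factorial (j + 1) : ℂ)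

lemma besselCoeff_eq_zero {n k : ℕ} (h : n < k) : besselCoeff n k = 0 := by
  rw [besselCoeff, Nat.choose_eq_zero_of_lt (by omega), zero_mul]

lemma besselCoeff_zero (n : ℕ) : besselCoeff n 0 = 1 := by
  simp [besselCoeff]

open Nat in
lemma besselCoeff_self (n : ℕ) : besselCoeff n n = (2 * n - 1)‼ := by
  rw [besselCoeff, ← two_mul, Nat.choose_self, one_mul]

open Nat in
lemma factorial_two_mul_eq (k : ℕ) : (2 * k)! = 2 ^ k * k ! * (2 * k - 1)‼ := by
  cases k with
  | zero => simp
  | succ k =>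
    have := Nat.factorial_eq_mul_doubleFactorial (2 * k + 1)
    rw [show 2 * k + 1 + 1 = 2 * (k + 1) by ring, Nat.doubleFactorial_two_mul] at this
    exact this

open Nat in
lemma factorial_mul_besselCoeff (n k : ℕ) :
    n ! * besselCoeff n k * 2 ^ k = n.choose k * (n + k)! := by
  rcases le_or_gt k n with h | h
  · have h1 := Nat.choose_mul_factorial_mul_factorial h
    have h2 := Nat.choose_mul_factorial_mul_factorial (n := n + k) (k := 2 * k) (by omega)
    rw [show n + k - 2 * k = n - k by omega, factorial_two_mul_eq] at h2
    rw [besselCoeff, ← h1, ← h2]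
    ring
  · rw [besselCoeff_eq_zero h, Nat.choose_eq_zero_of_lt h]; simp

open Nat in
/-- A closed form for the `n`-th finite difference of `k ↦ (a + k)! / (b + k)!`: one difference
step multiplies by `b - a` and raises `b` by one. -/
lemma alt_sum_factorial_div (n a b : ℕ) :
    ∑ k ∈ Finset.range (n + 1), (-1 : ℂ) ^ k * (n.choose k : ℂ) * (((a + k)! : ℂ) / ((b + k)! : ℂ))
      = (∏ i ∈ Finset.range n, ((b : ℂ) + i - a)) * ((a ! : ℂ) / ((b + n)! : ℂ)) := by
  induction n generalizing b with
  | zero => simp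
  | succ n ih =>
    have key : ∀ f : ℕ → ℂ,
        ∑ k ∈ Finset.range (n + 1 + 1), (-1 : ℂ) ^ k * ((n + 1).choose k : ℂ) * f k
        = ∑ k ∈ Finset.range (n + 1), (-1 : ℂ) ^ k * (n.choose k : ℂ) * (f k - f (k + 1)) := by
      intro f
      rw [Finset.sum_range_succ']
      simp only [Nat.choose_succ_succ, Nat.cast_add, mul_sub, Finset.sum_sub_distrib]
      rw [Finset.sum_range_succ' (fun k => (-1 : ℂ) ^ k * (n.choose k : ℂ) * f k)]
      have e : ∑ k ∈ Finset.range n, (-1 : ℂ) ^ (k + 1) * (n.choose (k + 1) : ℂ) * f (k + 1)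
          = ∑ k ∈ Finset.range (n + 1),
            (-1 : ℂ) ^ (k + 1) * (n.choose (k + 1) : ℂ) * f (k + 1) := by
        rw [Finset.sum_range_succ]; simp
      rw [e, add_sub_right_comm, ← Finset.sum_sub_distrib]
      simp only [pow_zero, Nat.choose_zero_right]
      congr 1
      exact Finset.sum_congr rfl fun k _ => by ring
    rw [key]
    have step : ∀ k : ℕ, (((a + k)! : ℂ) / ((b + k)! : ℂ))
        - (((a + (k + 1))! : ℂ) / ((b + (k + 1))! : ℂ))
        = ((b : ℂ) - a) * (((a + k)! : ℂ) / ((b + 1 + k)! : ℂ)) := by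
      intro k
      have h1 : ((b + k)! : ℂ) ≠ 0 := by exact_mod_cast (Nat.factorial_pos _).ne'
      have h2 : ((b : ℂ) + k + 1) ≠ 0 := by exact_mod_cast Nat.succ_ne_zero (b + k)
      rw [show b + 1 + k = b + k + 1 by ring, ← add_assoc a, ← add_assoc b,
        Nat.factorial_succ (a + k), Nat.factorial_succ (b + k)]
      push_cast
      field_simp
      ring
    simp only [step]
    have := ih (b + 1)
    rw [Finset.prod_range_succ']
    calc _ = ((b : ℂ) - a) * ∑ k ∈ Finset.range (n + 1),
          (-1 : ℂ) ^ k * (n.choose k : ℂ) * (((a + k)! : ℂ) / ((b + 1 + k)! : ℂ)) := by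
            rw [Finset.mul_sum]; exact Finset.sum_congr rfl fun k _ => by ring
      _ = _ := by
        rw [this, show b + 1 + n = b + (n + 1) by ring]
        have : ∏ i ∈ Finset.range n, (((b + 1 : ℕ) : ℂ) + i - a)
            = ∏ i ∈ Finset.range n, ((b : ℂ) + ((i + 1 : ℕ) : ℂ) - a) :=
          Finset.prod_congr rfl fun i _ => by push_cast; ring
        rw [this]
        push_cast
        ring

open Nat in
lemma sum_besselCoeff_mul_moment (n j : ℕ) :
    ∑ k ∈ Finset.range (n + 1), (besselCoeff n k : ℂ) * besselMoment (j + k)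
      = (-2 : ℂ) ^ j * (∏ i ∈ Finset.range n, ((j : ℂ) + 1 + i - n)) / ((j + 1 + n)! : ℂ) := by
  have hn : (n ! : ℂ) ≠ 0 := by exact_mod_cast (Nat.factorial_pos _).ne'
  have h := alt_sum_factorial_div n n (j + 1)
  have e : ∑ k ∈ Finset.range (n + 1), (besselCoeff n k : ℂ) * besselMoment (j + k)
      = (-2 : ℂ) ^ j / n ! * ∑ k ∈ Finset.range (n + 1),
        (-1 : ℂ) ^ k * (n.choose k : ℂ) * (((n + k)! : ℂ) / ((j + 1 + k)! : ℂ)) := by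
    rw [Finset.mul_sum]
    refine Finset.sum_congr rfl fun k _ => ?_
    have hk : (n ! : ℂ) * besselCoeff n k * 2 ^ k = n.choose k * ((n + k)! : ℂ) := by
      exact_mod_cast factorial_mul_besselCoeff n k
    rw [besselMoment, show j + k + 1 = j + 1 + k by ring]
    have h1 : ((j + 1 + k)! : ℂ) ≠ 0 := by exact_mod_cast (Nat.factorial_pos _).ne'
    have h2 : (-2 : ℂ) ^ (j + k) = (-2) ^ j * ((-1) ^ k * 2 ^ k) := by
      rw [pow_add, ← mul_pow]; norm_num
    rw [h2]
    field_simp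
    linear_combination hk
  rw [e, h]
  push_cast
  field_simp

/-- Orthogonality of the Bessel polynomials: `y_n` is orthogonal to `z ^ j` for `j < n`. -/
lemma bessel_orthogonal {n j : ℕ} (h : j < n) :
    ∑ k ∈ Finset.range (n + 1), (besselCoeff n k : ℂ) * besselMoment (j + k) = 0 := by
  rw [sum_besselCoeff_mul_moment]
  have : ∏ i ∈ Finset.range n, ((j : ℂ) + 1 + i - n) = 0 := by
    refine Finset.prod_eq_zero (i := n - 1 - j) (Finset.mem_range.2 (by omega)) ?_
    have : ((n : ℕ) : ℂ) = ((j + 1 + (n - 1 - j) : ℕ) : ℂ) := by congr 1; omega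
    rw [this]; push_cast; ring
  rw [this]; simp

/-- The moment pairing of `y_n` with `z ^ n` is nonzero: in the closed form each factor of the
product is a positive integer. -/
lemma bessel_norm_ne_zero (n : ℕ) :
    ∑ k ∈ Finset.range (n + 1), (besselCoeff n k : ℂ) * besselMoment (n + k) ≠ 0 := by
  rw [sum_besselCoeff_mul_moment]
  refine div_ne_zero (mul_ne_zero (pow_ne_zero _ (by norm_num)) ?_)
    (by exact_mod_cast (Nat.factorial_pos _).ne')
  refine Finset.prod_ne_zero_iff.2 fun i _ => ?_
  have : ((n : ℂ) + 1 + i - n) = ((i + 1 : ℕ) : ℂ) := by push_cast; ring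
  rw [this]
  exact_mod_cast Nat.succ_ne_zero i

/-- The Hankel matrices of the Bessel moments are nonsingular: a polynomial of degree `< N`
orthogonal to `1, z, …, z ^ (N - 1)` is zero. -/
lemma bessel_hankel_injective (N : ℕ) (h : ℕ → ℂ) (hdeg : ∀ k, N ≤ k → h k = 0)
    (horth : ∀ j < N, ∑ k ∈ Finset.range N, h k * besselMoment (j + k) = 0) (k : ℕ) :
    h k = 0 := by
  induction N with
  | zero => exact hdeg k (Nat.zero_le _)
  | succ N ih =>
    -- Pairing with `y_N` isolates the top coefficient `h N`.
    have hN : h N = 0 := by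
      have e : ∑ j ∈ Finset.range (N + 1), (besselCoeff N j : ℂ) *
          ∑ k ∈ Finset.range (N + 1), h k * besselMoment (j + k) = 0 :=
        Finset.sum_eq_zero fun j hj => by rw [horth j (Finset.mem_range.1 hj), mul_zero]
      simp only [Finset.mul_sum] at e
      rw [Finset.sum_comm] at e
      have e2 : ∀ k, ∑ j ∈ Finset.range (N + 1),
          (besselCoeff N j : ℂ) * (h k * besselMoment (j + k))
          = h k * ∑ j ∈ Finset.range (N + 1), (besselCoeff N j : ℂ) * besselMoment (k + j) := by
        intro k
        rw [Finset.mul_sum]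
        exact Finset.sum_congr rfl fun j _ => by rw [add_comm k j]; ring
      simp only [e2] at e
      rw [Finset.sum_range_succ, Finset.sum_eq_zero, zero_add] at e
      · exact (mul_eq_zero.1 e).resolve_right (bessel_norm_ne_zero N)
      · intro k hk
        rw [bessel_orthogonal (Finset.mem_range.1 hk), mul_zero]
    refine ih (fun k hk => ?_) (fun j hj => ?_)
    · rcases hk.eq_or_lt with rfl | hk
      · exact hN
      · exact hdeg k hk
    · have := horth j (by omega)
      rwa [Finset.sum_range_succ, hN, zero_mul, add_zero] at this

/-- A polynomial of degree `≤ r + 1` orthogonal to `1, z, …, z ^ (r - 1)` is a combination of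
`y_{r+1}` and `y_r`. -/
lemma quasi_orthogonal (r : ℕ) (F : ℕ → ℂ) (hdeg : ∀ k, r + 1 < k → F k = 0)
    (horth : ∀ j < r, ∑ k ∈ Finset.range (r + 2), F k * besselMoment (j + k) = 0) :
    ∃ a b : ℂ, ∀ k, F k = a * besselCoeff (r + 1) k + b * besselCoeff r k := by
  have hne : ∀ n, (besselCoeff n n : ℂ) ≠ 0 := fun n => by
    rw [besselCoeff_self]; exact_mod_cast (Nat.doubleFactorial_pos _).ne'
  have h1 := hne (r + 1)
  have h0 := hne r
  set a := F (r + 1) / besselCoeff (r + 1) (r + 1) with ha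
  set b := (F r - a * besselCoeff (r + 1) r) / besselCoeff r r with hb
  refine ⟨a, b, ?_⟩
  have hF1 : F (r + 1) - (a * besselCoeff (r + 1) (r + 1) + b * besselCoeff r (r + 1)) = 0 := by
    rw [besselCoeff_eq_zero (Nat.lt_succ_self r), ha]; field_simp; simp
  have hF0 : F r - (a * besselCoeff (r + 1) r + b * besselCoeff r r) = 0 := by
    rw [hb]; field_simp; ring
  have key := bessel_hankel_injective r
    (fun k => F k - (a * besselCoeff (r + 1) k + b * besselCoeff r k)) ?_ ?_
  · exact fun k => sub_eq_zero.1 (key k)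
  · intro k hk
    rcases hk.eq_or_lt with rfl | hk
    · exact hF0
    rcases (Nat.succ_le_of_lt hk).eq_or_lt with rfl | hk
    · exact hF1
    · simp [hdeg k hk, besselCoeff_eq_zero hk, besselCoeff_eq_zero (show r < k by omega)]
  · intro j hj
    have e1 := horth j hj
    have e2 := bessel_orthogonal (n := r + 1) (j := j) (by omega)
    have e3 : ∑ k ∈ Finset.range (r + 2), (besselCoeff r k : ℂ) * besselMoment (j + k) = 0 := by
      rw [Finset.sum_range_succ, bessel_orthogonal hj, besselCoeff_eq_zero (Nat.lt_succ_self r)]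
      simp
    have e4 : ∑ k ∈ Finset.range (r + 2),
        (F k - (a * besselCoeff (r + 1) k + b * besselCoeff r k)) * besselMoment (j + k) = 0 := by
      simp only [sub_mul, add_mul, Finset.sum_sub_distrib, Finset.sum_add_distrib, mul_assoc,
        ← Finset.mul_sum]
      rw [e1, e2, e3]; simp
    rw [Finset.sum_range_succ, Finset.sum_range_succ, hF1, hF0] at e4
    simpa using e4

/-! ### Products of primitive linear factors -/

open Polynomial in
lemma coeff_linear_mul_zero {R : Type*} [CommRing R] (a b : R) (P : R[X]) :
    ((C a * X - C b) * P).coeff 0 = -(b * P.coeff 0) := by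
  simp [sub_mul, mul_assoc]

open Polynomial in
lemma coeff_linear_mul_succ {R : Type*} [CommRing R] (a b : R) (P : R[X]) (j : ℕ) :
    ((C a * X - C b) * P).coeff (j + 1) = a * P.coeff j - b * P.coeff (j + 1) := by
  simp [sub_mul, mul_assoc, coeff_X_mul]

open Polynomial Classical in
/-- The Newton polygon of a product of primitive linear factors `α i X - β i` at a prime `π`:
if `c` of the `α i` are divisible by `π`, the top `c` coefficients are divisible by
`π, π ^ 2, …, π ^ c`, and the next coefficient is not divisible by `π`. -/
lemma newton_linear_prod {R ι : Type*} [CommRing R] {π : R} (hπ : Prime π)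
    (α β : ι → R) (hprim : ∀ i, ¬ (π ∣ α i ∧ π ∣ β i)) (T : Finset ι) :
    (∀ j, π ^ ((T.filter fun i => π ∣ α i).card + j - T.card) ∣
      (∏ i ∈ T, (C (α i) * X - C (β i))).coeff j) ∧
    ¬ π ∣ (∏ i ∈ T, (C (α i) * X - C (β i))).coeff
      (T.card - (T.filter fun i => π ∣ α i).card) := by
  induction T using Finset.induction_on with
  | empty =>
    refine ⟨fun j => ?_, ?_⟩
    · rcases j with _ | j
      · simp
      · simp [coeff_one]
    · simpa using fun h => hπ.not_isUnit (isUnit_of_dvd_one h)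
  | insert i T hi ih =>
    obtain ⟨ih1, ih2⟩ := ih
    have hc : (T.filter fun i => π ∣ α i).card ≤ T.card := Finset.card_filter_le _ _
    rw [Finset.prod_insert hi, Finset.card_insert_of_notMem hi, Finset.filter_insert]
    set P := ∏ i ∈ T, (C (α i) * X - C (β i)) with hP
    set c := (T.filter fun i => π ∣ α i).card with hcdef
    by_cases hdvd : π ∣ α i
    · rw [if_pos hdvd, Finset.card_insert_of_notMem (by simp [hi]), ← hcdef]
      have hβ : ¬ π ∣ β i := fun h => hprim i ⟨hdvd, h⟩
      refine ⟨fun j => ?_, ?_⟩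
      · rcases j with _ | j
        · rw [show c + 1 + 0 - (T.card + 1) = 0 by omega]; simp
        · rw [coeff_linear_mul_succ]
          refine dvd_sub ?_ ?_
          · refine (pow_dvd_pow π (show _ ≤ (c + j - T.card) + 1 by omega)).trans ?_
            rw [pow_succ, mul_comm]
            exact mul_dvd_mul hdvd (ih1 j)
          · refine Dvd.dvd.mul_left ?_ _
            rw [show c + 1 + (j + 1) - (T.card + 1) = c + (j + 1) - T.card by omega]
            exact ih1 (j + 1)
      · rw [show T.card + 1 - (c + 1) = T.card - c by omega]
        rcases hd : T.card - c with _ | d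
        · rw [coeff_linear_mul_zero, dvd_neg]
          rw [hd] at ih2
          exact fun h => (hπ.dvd_or_dvd h).elim hβ ih2
        · rw [coeff_linear_mul_succ]
          rw [hd] at ih2
          intro h
          have h' := (dvd_sub_right (hdvd.mul_right (P.coeff d))).1 h
          exact (hπ.dvd_or_dvd h').elim hβ ih2
    · rw [if_neg hdvd, ← hcdef]
      refine ⟨fun j => ?_, ?_⟩
      · rcases j with _ | j
        · rw [show c + 0 - (T.card + 1) = 0 by omega]; simp
        · rw [coeff_linear_mul_succ]
          refine dvd_sub ?_ ?_
          · refine Dvd.dvd.mul_left ?_ _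
            rw [show c + (j + 1) - (T.card + 1) = c + j - T.card by omega]
            exact ih1 j
          · refine Dvd.dvd.mul_left ?_ _
            exact (pow_dvd_pow π (by omega)).trans (ih1 (j + 1))
      · rw [show T.card + 1 - c = (T.card - c) + 1 by omega, coeff_linear_mul_succ]
        intro h
        have h1 : π ∣ P.coeff (T.card - c + 1) := by
          have := ih1 (T.card - c + 1)
          rwa [show c + (T.card - c + 1) - T.card = 1 by omega, pow_one] at this
        have h' := (dvd_sub_left (h1.mul_left (β i))).1 h
        exact (hπ.dvd_or_dvd h').elim hdvd ih2

/-! ### Gaussian integers -/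

/-- Any pair in `ℤ[i]` is a multiple of a pair not both divisible by the prime `π`. -/
lemma gaussian_extract {π : GaussianInt} (hπ : Prime π) (a b : GaussianInt) :
    ∃ g a' b', a = g * a' ∧ b = g * b' ∧ ¬ (π ∣ a' ∧ π ∣ b') := by
  classical
  let _ : GCDMonoid GaussianInt := EuclideanDomain.gcdMonoid _
  obtain ⟨a', b', h⟩ := extract_gcd a b
  refine ⟨gcd a b, a', b', h.1, h.2.1, fun hd => hπ.not_isUnit ?_⟩
  exact isUnit_of_dvd_unit (dvd_gcd hd.1 hd.2) h.2.2

/-- An odd rational prime is unramified in `ℤ[i]`: for a Gaussian prime `π` over `q`, the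
`π`-adic valuation of an integer is its `q`-adic valuation. -/
lemma gaussian_unramified {q : ℕ} (hq : q.Prime) (hq2 : q ≠ 2) {π : GaussianInt}
    (hπ : Prime π) (hπq : π ∣ (q : GaussianInt)) (k n : ℕ)
    (h : π ^ k ∣ (n : GaussianInt)) : q ^ k ∣ n := by
  have base : ∀ n : ℤ, π ∣ (n : GaussianInt) → (q : ℤ) ∣ n := by
    intro n hn
    by_contra hqn
    obtain ⟨u, v, huv⟩ := (Nat.prime_iff_prime_int.1 hq).coprime_iff_not_dvd.2 hqn
    have : (u : GaussianInt) * q + v * n = 1 := by exact_mod_cast congrArg (Int.cast) huv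
    exact hπ.not_isUnit (isUnit_of_dvd_one (this ▸
      dvd_add (hπq.mul_left _) (hn.mul_left _)))
  obtain ⟨w, hw⟩ := hπq
  have hπw : ¬ π ∣ w := by
    -- If `π ^ 2 ∣ q`, then `π` divides its conjugate, hence `q` divides `2 re π` and `2 im π`.
    rintro ⟨u, rfl⟩
    have hnorm : ((π.norm : ℤ) : GaussianInt) = π * star π := Zsqrtd.norm_eq_mul_conj π
    obtain ⟨t, ht⟩ := base π.norm (hnorm ▸ dvd_mul_right _ _)
    have hstar : π ∣ star π := by
      refine ⟨u * t, mul_left_cancel₀ hπ.ne_zero ?_⟩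
      rw [← hnorm, ht]
      push_cast
      rw [hw]; ring
    have hq2' : ¬ (q : ℤ) ∣ 2 := fun h => by
      have h' : q ∣ 2 := by exact_mod_cast h
      exact hq2 ((Nat.prime_dvd_prime_iff_eq hq Nat.prime_two).1 h')
    have hqp := Nat.prime_iff_prime_int.1 hq
    have hre : (q : ℤ) ∣ π.re := by
      refine (hqp.dvd_or_dvd (base (2 * π.re) ?_)).resolve_left hq2'
      have : ((2 * π.re : ℤ) : GaussianInt) = π + star π := by
        ext <;> simp; ring
      rw [this]; exact dvd_add dvd_rfl hstar
    have him : (q : ℤ) ∣ π.im := by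
      refine (hqp.dvd_or_dvd (base (2 * π.im) ?_)).resolve_left hq2'
      have : ((2 * π.im : ℤ) : GaussianInt) = (π - star π) * ⟨0, -1⟩ := by
        ext <;> simp; ring
      rw [this]; exact (dvd_sub dvd_rfl hstar).mul_right _
    have hqπ : ((q : ℤ) : GaussianInt) ∣ π := (Zsqrtd.intCast_dvd _ _).2 ⟨hre, him⟩
    rw [Int.cast_natCast, hw] at hqπ
    obtain ⟨v, hv⟩ := hqπ
    refine hπ.not_isUnit (IsUnit.of_mul_eq_one (u * v) (mul_left_cancel₀ hπ.ne_zero ?_))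
    rw [mul_one]; exact Eq.trans (by ring) hv.symm
  induction k generalizing n with
  | zero => simp
  | succ k ih =>
    have h1 : q ∣ n := by
      have := base n (by simpa using (dvd_pow_self π (Nat.succ_ne_zero k)).trans h)
      exact_mod_cast this
    obtain ⟨n', rfl⟩ := h1
    rw [pow_succ']
    refine mul_dvd_mul_left q (ih n' ?_)
    rw [Nat.cast_mul, hw, pow_succ', mul_assoc] at h
    exact hπ.pow_dvd_of_dvd_mul_left k hπw ((mul_dvd_mul_iff_left hπ.ne_zero).1 h)

/-! ### The obstruction at a prime and the choice of the prime -/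

lemma odd_dvd_doubleFactorial (j i : ℕ) (h : i < j) :
    2 * i + 1 ∣ Nat.doubleFactorial (2 * j - 1) := by
  induction j with
  | zero => omega
  | succ j ih =>
    rw [show 2 * (j + 1) - 1 = 2 * j + 1 by omega, Nat.doubleFactorial_add_one]
    rcases (Nat.lt_succ_iff.1 h).eq_or_lt with rfl | h'
    · exact dvd_mul_right _ _
    · exact (ih h').mul_left _

/-- The local obstruction at `q`: the product `F = ∏ (α i X - β i)` cannot be a combination of
`y_{r+1}` and `y_r` when `q ∤ r + 1` and `q` divides the top `s` coefficients of both polynomials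
while `q ^ (s - 1)` does not divide the leading coefficient `(2 r + 1)‼` of `y_{r+1}`. -/
lemma no_split_combination {r q s : ℕ} (hs2 : 2 ≤ s)
    {π : GaussianInt} (hπ : Prime π) (hπq : π ∣ (q : GaussianInt))
    (hunr : ∀ k n : ℕ, π ^ k ∣ (n : GaussianInt) → q ^ k ∣ n) (hqr : ¬ q ∣ r + 1)
    (hlead : ¬ q ^ (s - 1) ∣ Nat.doubleFactorial (2 * r + 1))
    (htop : ∀ j, r + 1 < j + s → q ∣ besselCoeff (r + 1) j ∧ q ∣ besselCoeff r j)
    (α β : Fin (r + 1) → GaussianInt) (hprim : ∀ i, ¬ (π ∣ α i ∧ π ∣ β i))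
    (F : Polynomial GaussianInt)
    (hF : F = ∏ i, (Polynomial.C (α i) * Polynomial.X - Polynomial.C (β i)))
    (hrel : ∃ a b : ℂ, ∀ k, (F.coeff k).toComplex
      = a * besselCoeff (r + 1) k + b * besselCoeff r k) : False := by
  classical
  obtain ⟨a, b, hab⟩ := hrel
  obtain ⟨hN1, hN2⟩ := newton_linear_prod hπ α β hprim Finset.univ
  rw [← hF, Finset.card_univ, Fintype.card_fin] at hN2
  simp only [← hF, Finset.card_univ, Fintype.card_fin] at hN1
  set c := (Finset.univ.filter fun i => π ∣ α i).card with hc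
  set D := Nat.doubleFactorial (2 * r + 1) with hD
  have hYm : besselCoeff (r + 1) (r + 1) = D := by
    rw [besselCoeff_self, hD]; rfl
  have hYm0 : besselCoeff r (r + 1) = 0 := besselCoeff_eq_zero (Nat.lt_succ_self r)
  have hD0 : (D : GaussianInt) ≠ 0 :=
    Nat.cast_ne_zero.2 (Nat.pos_iff_ne_zero.1 (Nat.doubleFactorial_pos _))
  -- Clear denominators in the relation between `F` and the Bessel polynomials.
  have hrel : ∀ k, (D : GaussianInt) * F.coeff k = F.coeff (r + 1) * besselCoeff (r + 1) k
      + (D * F.coeff 0 - F.coeff (r + 1)) * besselCoeff r k := by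
    intro k
    apply GaussianInt.toComplex_injective
    have h0 := hab 0
    have h1 := hab (r + 1)
    rw [besselCoeff_zero, besselCoeff_zero] at h0
    rw [hYm, hYm0] at h1
    simp only [map_mul, map_add, map_sub, map_natCast]
    rw [hab k, h0, h1]
    push_cast
    ring
  obtain ⟨g, A, B, hA, hB, hAB⟩ :=
    gaussian_extract hπ (F.coeff (r + 1)) (D * F.coeff 0 - F.coeff (r + 1))
  obtain ⟨t, D', g', hD', hg', hDg⟩ := gaussian_extract hπ (D : GaussianInt) g
  set G : ℕ → GaussianInt := fun k => A * besselCoeff (r + 1) k + B * besselCoeff r k with hG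
  have ht : t ≠ 0 := by rintro rfl; exact hD0 (by rw [hD', zero_mul])
  have hFG : ∀ k, D' * F.coeff k = g' * G k := by
    intro k
    apply mul_left_cancel₀ ht
    have := hrel k
    rw [hB, hA] at this
    simp only [hG]
    linear_combination this - F.coeff k * hD'
      + hg' * (A * besselCoeff (r + 1) k + B * besselCoeff r k)
  -- `G` is primitive at `π`, seen on its coefficients of degree `0` and `1`.
  have hGprim : ¬ ∀ k, π ∣ G k := by
    intro h
    have h0 : π ∣ A + B := by simpa [hG, besselCoeff_zero] using h 0
    have h1 := h 1
    have e1 : besselCoeff (r + 1) 1 = besselCoeff r 1 + (r + 1) := by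
      have : (r + 1 + 1).choose 2 = (r + 1).choose 1 + (r + 1).choose 2 :=
        Nat.choose_succ_succ (r + 1) 1
      simp only [besselCoeff, mul_one, this, Nat.choose_one_right]
      simp [add_comm]
    have h2 : π ∣ A * ((r + 1 : ℕ) : GaussianInt) := by
      have : A * ((r + 1 : ℕ) : GaussianInt) = G 1 - (A + B) * besselCoeff r 1 := by
        simp only [hG, e1]; push_cast; ring
      rw [this]
      exact dvd_sub h1 (h0.mul_right _)
    rcases hπ.dvd_or_dvd h2 with h3 | h3
    · exact hAB ⟨h3, (dvd_add_right h3).1 h0⟩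
    · exact hqr (by simpa using hunr 1 (r + 1) (by simpa using h3))
  have hDπ : ¬ π ∣ D' := by
    intro h
    have hg : ¬ π ∣ g' := fun h' => hDg ⟨h, h'⟩
    refine hGprim fun k => (hπ.dvd_or_dvd ?_).resolve_left hg
    rw [← hFG k]; exact h.mul_right _
  have hgπ : ¬ π ∣ g' := by
    intro h
    refine hN2 ((hπ.dvd_or_dvd ?_).resolve_left hDπ)
    rw [hFG]; exact h.mul_right _
  have hFtoG : ∀ e k, π ^ e ∣ F.coeff k → π ^ e ∣ G k := fun e k h =>
    hπ.pow_dvd_of_dvd_mul_left e hgπ (hFG k ▸ h.mul_left D')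
  have hGtoF : ∀ k, π ∣ G k → π ∣ F.coeff k := fun k h =>
    (hπ.dvd_or_dvd (hFG k ▸ h.mul_left g' : π ∣ D' * F.coeff k)).resolve_left hDπ
  -- The top `s` coefficients are divisible by `π`, so at least `s` of the `α i` are.
  have hcs : s ≤ c := by
    by_contra hlt
    have hcr : c ≤ r + 1 := by
      simpa using Finset.card_filter_le (Finset.univ : Finset (Fin (r + 1))) (fun i => π ∣ α i)
    refine hN2 (hGtoF _ ?_)
    obtain ⟨h1, h2⟩ := htop (r + 1 - c) (by omega)
    have h1' : (q : GaussianInt) ∣ besselCoeff (r + 1) (r + 1 - c) := Nat.cast_dvd_cast h1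
    have h2' : (q : GaussianInt) ∣ besselCoeff r (r + 1 - c) := Nat.cast_dvd_cast h2
    exact dvd_add ((hπq.trans h1').mul_left _) ((hπq.trans h2').mul_left _)
  have hlead' : ∀ n : ℕ, n ∣ D → ¬ π ^ (s - 1) ∣ (n : GaussianInt) := fun n hn h =>
    hlead ((hunr _ _ h).trans hn)
  have hG1 : π ^ s ∣ A * D := by
    have := hFtoG s (r + 1) ((pow_dvd_pow π (by omega)).trans (hN1 (r + 1)))
    simpa [hG, hYm, hYm0] using this
  have hG0 : π ^ (s - 1) ∣ G r :=
    hFtoG _ r ((pow_dvd_pow π (by omega)).trans (hN1 r))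
  have hG1' : π ^ (s - 1) ∣ A * D := (pow_dvd_pow π (by omega)).trans hG1
  have hAπ : π ∣ A := by
    by_contra h
    exact hlead' D dvd_rfl (hπ.pow_dvd_of_dvd_mul_left _ h hG1')
  have hBπ : ¬ π ∣ B := fun h => hAB ⟨hAπ, h⟩
  have hDr : D = (2 * r + 1) * besselCoeff r r := by
    rw [hD, Nat.doubleFactorial_add_one, besselCoeff_self]
  have hYr : besselCoeff (r + 1) r = D := by
    rw [hDr, besselCoeff_self, besselCoeff, show r + 1 + r = 2 * r + 1 by ring,
      Nat.choose_succ_self_right]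
  refine hlead' (besselCoeff r r) (hDr ▸ dvd_mul_left _ _)
    (hπ.pow_dvd_of_dvd_mul_left _ hBπ ?_)
  simp only [hG, hYr] at hG0
  exact (dvd_add_right hG1').1 hG0

/-- The choice of the prime. Put `m = r + 1`. For `m ≥ 6`, Bertrand's postulate gives an odd prime
`q` with `m / 2 < q < m`, and `s = 4` works. The cases `m = 4, 5` use
`(q, s) = (3, 3), (7, 3)`. -/
lemma exists_good_prime (r : ℕ) (hr : 3 ≤ r) :
    ∃ q s : ℕ, q.Prime ∧ q ≠ 2 ∧ 2 ≤ s ∧ ¬ q ∣ r + 1 ∧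
      ¬ q ^ (s - 1) ∣ Nat.doubleFactorial (2 * r + 1) ∧
      ∀ j, r + 1 < j + s → q ∣ besselCoeff (r + 1) j ∧ q ∣ besselCoeff r j := by
  have aux : ∀ r s q, (∀ j ∈ Finset.Icc (r + 2 - s) (r + 1),
      q ∣ besselCoeff (r + 1) j ∧ q ∣ besselCoeff r j) →
      ∀ j, r + 1 < j + s → q ∣ besselCoeff (r + 1) j ∧ q ∣ besselCoeff r j := by
    intro r s q h j hj
    rcases le_or_gt j (r + 1) with hj' | hj'
    · exact h j (Finset.mem_Icc.2 ⟨by omega, hj'⟩)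
    · rw [besselCoeff_eq_zero hj', besselCoeff_eq_zero (by omega)]
      exact ⟨dvd_zero q, dvd_zero q⟩
  rcases (show r = 3 ∨ r = 4 ∨ 5 ≤ r by omega) with rfl | rfl | hr5
  · exact ⟨3, 3, by norm_num, by norm_num, by norm_num, by norm_num, by decide,
      aux _ _ _ (by decide)⟩
  · exact ⟨7, 3, by norm_num, by norm_num, by norm_num, by norm_num, by decide,
      aux _ _ _ (by decide)⟩
  obtain ⟨q, hq, hq1, hq2⟩ := Nat.exists_prime_lt_and_le_two_mul ((r + 1) / 2) (by omega)
  have hqodd : q % 2 = 1 := (hq.eq_two_or_odd).resolve_left (by omega)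
  have hq5 : 5 ≤ q := by
    have : q ≠ 4 := by rintro rfl; omega
    omega
  have hqr : q < r + 1 := by
    by_contra h
    have : q = r + 1 := by omega
    omega
  have hfact : Fact q.Prime := ⟨hq⟩
  refine ⟨q, 4, hq, by omega, by omega, ?_, ?_, ?_⟩
  · rintro ⟨t, ht⟩
    have h1 : 1 < t := by by_contra h; interval_cases t <;> omega
    have := Nat.mul_le_mul_left q h1
    omega
  · intro h
    -- `(2 m)! = 2 ^ m * m! * (2 m - 1)‼` would be divisible by `q ^ 4`, while `2 m < 4 q`.
    have e := factorial_two_mul_eq (r + 1)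
    rw [show 2 * (r + 1) - 1 = 2 * r + 1 by omega] at e
    have h4 : q ^ 4 ∣ (2 * (r + 1)).factorial := by
      rw [e, show q ^ 4 = q * q ^ 3 by ring]
      exact mul_dvd_mul (((hq.dvd_factorial).2 hqr.le).mul_left _) h
    rw [padicValNat_dvd_iff_le (Nat.factorial_ne_zero _)] at h4
    have hsq : 2 * (r + 1) < q ^ 2 := by
      have : 2 * (r + 1) < 4 * q := by omega
      nlinarith
    have hv := padicValNat_factorial (p := q) (n := 2 * (r + 1)) (b := 2)
      (Nat.log_lt_of_lt_pow (by omega) hsq)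
    have hdiv : 2 * (r + 1) / q < 4 := (Nat.div_lt_iff_lt_mul hq.pos).2 (by omega)
    rw [hv] at h4
    simp at h4
    omega
  · intro j hj
    have : q ∣ Nat.doubleFactorial (2 * j - 1) := by
      have := odd_dvd_doubleFactorial j (q / 2) (by omega)
      rwa [show 2 * (q / 2) + 1 = q by omega] at this
    exact ⟨this.mul_left _, this.mul_left _⟩

/-- A point of `ℚ(i)` is the root of a linear polynomial over `ℤ[i]` primitive at `π`. -/
lemma gaussian_fraction {π : GaussianInt} (hπ : Prime π) (a b : ℚ) :
    ∃ α β : GaussianInt, ¬ (π ∣ α ∧ π ∣ β) ∧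
      α.toComplex * ((a : ℂ) + (b : ℂ) * Complex.I) = β.toComplex := by
  obtain ⟨g, α, β, h1, h2, h3⟩ := gaussian_extract hπ ((a.den * b.den : ℕ) : GaussianInt)
    ⟨a.num * b.den, b.num * a.den⟩
  refine ⟨α, β, h3, ?_⟩
  have ha : (a.den : ℂ) ≠ 0 := by exact_mod_cast a.den_ne_zero
  have hb : (b.den : ℂ) ≠ 0 := by exact_mod_cast b.den_ne_zero
  have e1 := congrArg GaussianInt.toComplex h1
  have e2 := congrArg GaussianInt.toComplex h2
  rw [map_natCast, map_mul] at e1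
  rw [map_mul, GaussianInt.toComplex_def'] at e2
  have hg : g.toComplex ≠ 0 := by
    intro h
    rw [h, zero_mul] at e1
    push_cast at e1
    exact mul_ne_zero ha hb e1
  apply mul_left_cancel₀ hg
  rw [← mul_assoc, ← e1, ← e2, Rat.cast_def a, Rat.cast_def b]
  push_cast
  field_simp

open Finset in
/-- For every integer `r ≥ 3`, there is no quadrature formula of degree `2r` for the
Bessel weight with `r + 1` nodes on `ℚ(√-1)`. -/
theorem no_bessel_quadrature_deg_two_r_on_Qi (r : ℕ) (hr : 3 ≤ r) :
    ¬ ∃ (x z : Fin (r + 1) → ℂ),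
      Function.Injective z ∧
      (∀ i, ∃ a b : ℚ, z i = (a : ℂ) + (b : ℂ) * Complex.I) ∧
      (∀ j : ℕ, j ≤ 2 * r →
        ∑ i, x i * z i ^ j = (-2 : ℂ) ^ j / (Nat.factorial (j + 1) : ℂ)) := by
  rintro ⟨x, z, -, hz, hquad⟩
  obtain ⟨q, s, hq, hq2, hs2, hqr, hlead, htop⟩ := exists_good_prime r hr
  have hqunit : ¬ IsUnit (q : GaussianInt) := by
    intro h
    have h' := Zsqrtd.norm_eq_one_iff.2 h
    rw [Zsqrtd.norm_natCast, Int.natAbs_mul] at h'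
    simp at h'
    exact hq.one_lt.ne' h'
  obtain ⟨π, hirr, hπq⟩ := WfDvdMonoid.exists_irreducible_factor hqunit
    (by exact_mod_cast hq.ne_zero)
  have hπ : Prime π := hirr.prime
  have hfrac : ∀ i, ∃ α β : GaussianInt, ¬ (π ∣ α ∧ π ∣ β) ∧
      α.toComplex * z i = β.toComplex := by
    intro i
    obtain ⟨a, b, hi⟩ := hz i
    rw [hi]
    exact gaussian_fraction hπ a b
  choose α β hprim hroot using hfrac
  set F : Polynomial GaussianInt :=
    ∏ i, (Polynomial.C (α i) * Polynomial.X - Polynomial.C (β i)) with hF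
  have hdeg : F.natDegree ≤ r + 1 := by
    refine (Polynomial.natDegree_prod_le _ _).trans ?_
    refine (Finset.sum_le_card_nsmul _ _ 1 fun i _ => ?_).trans (by simp)
    compute_degree
  have heval : ∀ i, ∑ k ∈ range (r + 2), (F.coeff k).toComplex * z i ^ k = 0 := by
    intro i
    rw [← Polynomial.eval₂_eq_sum_range' GaussianInt.toComplex (by omega : F.natDegree < r + 2),
      hF, Polynomial.eval₂_finsetProd]
    refine Finset.prod_eq_zero (mem_univ i) ?_
    simp [hroot i]
  refine no_split_combination hs2 hπ hπq (gaussian_unramified hq hq2 hπ hπq) hqr hlead htop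
    α β hprim F hF (quasi_orthogonal r (fun k => (F.coeff k).toComplex) ?_ ?_)
  · intro k hk
    simp [Polynomial.coeff_eq_zero_of_natDegree_lt (lt_of_le_of_lt hdeg hk)]
  · intro j hj
    -- The quadrature formula is exact in degree `j + (r + 1) ≤ 2 r`, and `F` vanishes at the nodes.
    have e : ∀ k ∈ range (r + 2), (F.coeff k).toComplex * besselMoment (j + k)
        = ∑ i, x i * z i ^ j * ((F.coeff k).toComplex * z i ^ k) := by
      intro k hk
      have hk' := mem_range.1 hk
      rw [besselMoment, ← hquad (j + k) (by omega), Finset.mul_sum]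
      exact Finset.sum_congr rfl fun i _ => by rw [pow_add]; ring
    rw [Finset.sum_congr rfl e, Finset.sum_comm]
    refine Finset.sum_eq_zero fun i _ => ?_
    rw [← Finset.mul_sum, heval i, mul_zero]
end

section
/- (Breusch.) For every integer n ≥ 4 there exists a prime number p such that n < p ≤ 2n and p ≡ 3 (mod 4). -/
/-!
Chebyshev's method, applied to the residue classes modulo 4. Let `L r N` be the sum of `log n` over
the `n ≤ N` with `n ≡ r (mod 4)`. Writing `log n = ∑_{d ∣ n} Λ d` gives
`L r N = ∑_{d ≤ N} Λ d * #{k ≤ N / d : d k ≡ r (mod 4)}` (`L_eq`), and the count is an explicit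
function `cnt r (d % 4) (N / d)`. Consider the combination
`F N = L 3 N - L 3 (N / 2) - L 1 (N / 3) - L 3 (N / 4) + L 1 (N / 12)`.

* Since `L r N = (N log N - N) / 4 + O(log N)` and `1 - 1/2 - 1/3 - 1/4 + 1/12 = 0`, the terms of
  order `N log N` cancel and `F N ≥ (5/24 log 2 + 1/16 log 3) N - O(log N)` (`le_F`).
* The weight of `Λ d` in `F N` depends only on `d % 4` and `u = N / d`. It never exceeds `1`, and
  for `u < 9` it is positive only if `d ≡ 3 (mod 4)` and `u = 1`, that is, `N / 2 < d ≤ N`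
  (`weight_le`).

For `N = 2 n`, if no prime `p ≡ 3 (mod 4)` satisfies `n < p ≤ 2 n`, then the terms with `u = 1` come
from proper prime powers only, so `F N ≤ (ψ N - θ N) + ψ (N / 9)` (`F_le`). With
`ψ x ≤ log 4 * x + O(√x log x)` and `ψ x - θ x = O(√x log x)`, this contradicts the lower bound,
because `5/24 log 2 + 1/16 log 3 ≈ 0.213` exceeds `log 4 / 9 ≈ 0.154`. The constants are explicit,
so that the argument covers `n ≥ 2 ^ 19`; below that, a chain of primes `≡ 3 (mod 4)`, each at most
twice the preceding one, suffices.
-/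

namespace Breusch

open Finset ArithmeticFunction

/-! ### Logarithmic sums over residue classes and the von Mangoldt function -/

/-- The number of `k` with `1 ≤ k ≤ v` and `j * k ≡ r (mod 4)`, for `r ∈ {1, 3}` and `j < 4`.
For `j = 1` these are the `k ≡ r`, for `j = 3` the `k ≡ -r`; for even `j` there are none. -/
def cnt (r j v : ℕ) : ℕ :=
  if j = 1 then (v + (4 - r)) / 4 else if j = 3 then (v + r) / 4 else 0

theorem sum_dvd_mod (r d : ℕ) (hr : r = 1 ∨ r = 3) (hd : 0 < d) (N : ℕ) :
    (∑ n ∈ Ioc 0 N, if d ∣ n ∧ n % 4 = r then 1 else 0) = cnt r (d % 4) (N / d) := by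
  induction N with
  | zero => rcases hr with rfl | rfl <;> simp [cnt]
  | succ N ih =>
    rw [Finset.sum_Ioc_succ_top (Nat.zero_le N), ih, Nat.succ_div]
    by_cases h : d ∣ N + 1
    · obtain ⟨k, hk⟩ := h
      have hk' : N / d + 1 = k := by
        have := Nat.succ_div (a := N) (b := d)
        rw [hk, Nat.mul_div_cancel_left k hd, if_pos (dvd_mul_right d k)] at this
        exact this.symm
      obtain ⟨a, b, hb, hab⟩ : ∃ a b, b < 4 ∧ N / d = 4 * a + b :=
        ⟨N / d / 4, N / d % 4, Nat.mod_lt _ (by norm_num), (Nat.div_add_mod _ 4).symm⟩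
      have hmod : (d * k) % 4 = ((d % 4) * ((b + 1) % 4)) % 4 := by
        rw [Nat.mul_mod, ← hk', hab, show (4 * a + b + 1) % 4 = (b + 1) % 4 by omega]
      rw [hk, if_pos (dvd_mul_right d k), hab, hmod]
      simp only [dvd_mul_right, true_and]
      have hj : d % 4 < 4 := Nat.mod_lt _ (by norm_num)
      unfold cnt
      generalize d % 4 = j at hj
      rcases hr with rfl | rfl <;> interval_cases j <;> interval_cases b <;> simp <;> omega
    · simp [h]

/-- The sum of `log n` over `1 ≤ n ≤ N` with `n ≡ r (mod 4)`. -/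
noncomputable def L (r N : ℕ) : ℝ := ∑ n ∈ Ioc 0 N, if n % 4 = r then Real.log n else 0

theorem L_eq (r : ℕ) (hr : r = 1 ∨ r = 3) (N : ℕ) :
    L r N = ∑ d ∈ Ioc 0 N, Λ d * (cnt r (d % 4) (N / d) : ℝ) := by
  have h1 : ∀ n ∈ Ioc 0 N, (if n % 4 = r then Real.log n else 0) =
      ∑ d ∈ Ioc 0 N, Λ d * ((if d ∣ n ∧ n % 4 = r then 1 else 0 : ℕ) : ℝ) := by
    intro n hn
    rw [mem_Ioc] at hn
    by_cases h : n % 4 = r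
    · rw [if_pos h, ← vonMangoldt_sum]
      simp only [h, and_true, Nat.cast_ite, Nat.cast_one, Nat.cast_zero, mul_ite, mul_one, mul_zero]
      rw [← sum_filter]
      refine sum_congr ?_ fun _ _ => rfl
      ext d
      simp only [Nat.mem_divisors, mem_filter, mem_Ioc]
      constructor
      · rintro ⟨hd, _⟩
        exact ⟨⟨Nat.pos_of_dvd_of_pos hd hn.1, (Nat.le_of_dvd hn.1 hd).trans hn.2⟩, hd⟩
      · rintro ⟨_, hd⟩
        exact ⟨hd, by omega⟩
    · simp [h]
  rw [L, sum_congr rfl h1, sum_comm]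
  refine sum_congr rfl fun d hd => ?_
  rw [← mul_sum, ← Nat.cast_sum, sum_dvd_mod r d hr (mem_Ioc.1 hd).1]

/-- `L_eq` at `N / m`, with the range of summation extended to all `d ≤ N`: the weights vanish for
`d > N / m`. -/
theorem L_div_eq (r : ℕ) (hr : r = 1 ∨ r = 3) (N m : ℕ) :
    L r (N / m) = ∑ d ∈ Ioc 0 N, Λ d * (cnt r (d % 4) (N / d / m) : ℝ) := by
  rw [L_eq r hr]
  simp only [Nat.div_right_comm N m]
  refine sum_subset (Ioc_subset_Ioc_right (Nat.div_le_self N m)) fun d hd hd' => ?_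
  have h0 : N / d / m = 0 := by
    rw [Nat.div_right_comm]
    simp only [mem_Ioc] at hd hd'
    exact Nat.div_eq_of_lt (by omega)
  rcases hr with rfl | rfl <;> simp [h0, cnt]

/-! ### Asymptotics of the logarithmic sums -/

/-- The antiderivative `x log x - x` of the logarithm. -/
noncomputable def h (x : ℝ) : ℝ := x * Real.log x - x

/-- Convexity of `h`. Swapping `a` and `b` gives the lower bound `(b - a) * log a ≤ h b - h a`. -/
theorem h_sub_le {a b : ℝ} (ha : 0 < a) (hb : 0 < b) : h b - h a ≤ (b - a) * Real.log b := by
  have h1 := Real.log_le_sub_one_of_pos (div_pos hb ha)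
  rw [Real.log_div hb.ne' ha.ne'] at h1
  have h2 : a * (Real.log b - Real.log a) ≤ a * (b / a - 1) := mul_le_mul_of_nonneg_left h1 ha.le
  have h3 : a * (b / a - 1) = b - a := by field_simp
  unfold h
  linarith

/-- Any four consecutive integers contain exactly one element of each residue class. -/
theorem L_add_four (r N : ℕ) (hr : r < 4) :
    ∃ a : ℕ, N + 1 ≤ a ∧ a ≤ N + 4 ∧ L r (N + 4) = L r N + Real.log a := by
  have key : L r (N + 4) = L r N + (if (N + 1) % 4 = r then Real.log (N + 1 : ℕ) else 0)
      + (if (N + 2) % 4 = r then Real.log (N + 2 : ℕ) else 0)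
      + (if (N + 3) % 4 = r then Real.log (N + 3 : ℕ) else 0)
      + (if (N + 4) % 4 = r then Real.log (N + 4 : ℕ) else 0) := by
    simp only [L, Finset.sum_Ioc_succ_top (Nat.zero_le _)]
  have : (N + 1) % 4 = r ∨ (N + 2) % 4 = r ∨ (N + 3) % 4 = r ∨ (N + 4) % 4 = r := by omega
  rcases this with h1 | h1 | h1 | h1
  · refine ⟨N + 1, by omega, by omega, ?_⟩
    rw [key, if_pos h1, if_neg (by omega), if_neg (by omega), if_neg (by omega)]; ring
  · refine ⟨N + 2, by omega, by omega, ?_⟩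
    rw [key, if_neg (by omega), if_pos h1, if_neg (by omega), if_neg (by omega)]; ring
  · refine ⟨N + 3, by omega, by omega, ?_⟩
    rw [key, if_neg (by omega), if_neg (by omega), if_pos h1, if_neg (by omega)]; ring
  · refine ⟨N + 4, by omega, by omega, ?_⟩
    rw [key, if_neg (by omega), if_neg (by omega), if_neg (by omega), if_pos h1]; ring

theorem L_nonneg (r N : ℕ) : 0 ≤ L r N :=
  sum_nonneg fun n _ => by split_ifs; exacts [Real.log_natCast_nonneg n, le_rfl]

theorem L_three_le (r N : ℕ) (hr : r = 1 ∨ r = 3) (hN : N < 4) : L r N ≤ Real.log 3 := by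
  have := Real.log_nonneg (by norm_num : (1:ℝ) ≤ 3)
  rcases hr with rfl | rfl <;> interval_cases N <;> simp [L, Finset.sum_Ioc_succ_top, this]

theorem L_le (r : ℕ) (hr : r = 1 ∨ r = 3) (N : ℕ) : L r N ≤ h (N + 4) / 4 + 1 := by
  induction N using Nat.strong_induction_on with
  | _ N ih =>
    by_cases hN : N < 4
    · have h1 := h_sub_le (a := (N + 4 : ℝ)) (b := 4) (by positivity) (by norm_num)
      have h2 : Real.log 3 ≤ Real.log 4 := Real.log_le_log (by norm_num) (by norm_num)
      have h3 : 0 ≤ (N : ℝ) * Real.log 4 :=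
        mul_nonneg N.cast_nonneg (Real.log_nonneg (by norm_num))
      have h4 := L_three_le r N hr hN
      have h5 : h 4 = 4 * Real.log 4 - 4 := rfl
      linarith
    · obtain ⟨M, rfl⟩ : ∃ M, N = M + 4 := ⟨N - 4, by omega⟩
      obtain ⟨a, ha1, ha2, ha⟩ := L_add_four r M (by omega)
      have ih := ih M (by omega)
      have h1 : Real.log a ≤ Real.log (M + 4 : ℝ) :=
        Real.log_le_log (by exact_mod_cast (by omega : 0 < a)) (by exact_mod_cast ha2)
      have h2 := h_sub_le (a := (M + 4 : ℝ) + 4) (b := M + 4) (by positivity) (by positivity)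
      rw [ha]
      push_cast
      linarith

theorem le_L (r : ℕ) (hr : r = 1 ∨ r = 3) (N : ℕ) (hN1 : 1 ≤ N) :
    h N / 4 - 1 ≤ L r (N + 3) := by
  induction N using Nat.strong_induction_on with
  | _ N ih =>
    by_cases hN : N ≤ 4
    · refine le_trans ?_ (L_nonneg r _)
      have hN' : (N : ℝ) ≤ 4 := by exact_mod_cast hN
      have h1 : Real.log N ≤ Real.log 4 := Real.log_le_log (by exact_mod_cast hN1) hN'
      have h2 : Real.log 4 = 2 * Real.log 2 := by
        rw [show (4 : ℝ) = 2 ^ 2 by norm_num, Real.log_pow]; norm_num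
      have h3 := Real.log_two_lt_d9
      have h4 : (N : ℝ) * Real.log N ≤ N * 2 :=
        mul_le_mul_of_nonneg_left (by linarith) N.cast_nonneg
      unfold h
      linarith
    · obtain ⟨M, rfl⟩ : ∃ M, N = M + 4 := ⟨N - 4, by omega⟩
      obtain ⟨a, ha1, ha2, ha⟩ := L_add_four r (M + 3) (by omega)
      have ih := ih M (by omega) (by omega)
      have hM : (0 : ℝ) < M := by exact_mod_cast (by omega : 0 < M)
      have h1 : Real.log (M + 4 : ℝ) ≤ Real.log a :=
        Real.log_le_log (by positivity) (by exact_mod_cast ha1)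
      have h2 := h_sub_le (a := (M : ℝ)) (b := M + 4) hM (by positivity)
      rw [show M + 4 + 3 = M + 3 + 4 by ring, ha]
      push_cast
      linarith

/-- In `h (N / m)` the quotient is real, in `L r (N / m)` it is rounded down. -/
theorem L_div_le (r : ℕ) (hr : r = 1 ∨ r = 3) (N m : ℕ) (hN : 0 < N) (hm : 0 < m) :
    L r (N / m) ≤ h (N / m) / 4 + (Real.log (N + 4) + 1) := by
  have hN' : (0 : ℝ) < N := by exact_mod_cast hN
  have hm' : (0 : ℝ) < m := by exact_mod_cast hm
  have hv : ((N / m : ℕ) : ℝ) ≤ N / m := Nat.cast_div_le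
  have hvN : ((N / m : ℕ) : ℝ) ≤ N := by exact_mod_cast Nat.div_le_self N m
  have h1 := L_le r hr (N / m)
  have h2 := h_sub_le (a := (N / m : ℝ)) (b := ((N / m : ℕ) : ℝ) + 4) (by positivity)
    (by positivity)
  have h3 : Real.log (((N / m : ℕ) : ℝ) + 4) ≤ Real.log (N + 4) :=
    Real.log_le_log (by positivity) (by linarith)
  have h4 : 0 ≤ Real.log (((N / m : ℕ) : ℝ) + 4) :=
    Real.log_nonneg (by linarith [((N / m : ℕ)).cast_nonneg (α := ℝ)])
  have h5 : (((N / m : ℕ) : ℝ) + 4 - N / m) * Real.log (((N / m : ℕ) : ℝ) + 4) ≤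
      4 * Real.log (((N / m : ℕ) : ℝ) + 4) := mul_le_mul_of_nonneg_right (by linarith) h4
  linarith

theorem le_L_div (r : ℕ) (hr : r = 1 ∨ r = 3) (N m : ℕ) (hm : 0 < m) (hN : 4 * m ≤ N) :
    h (N / m) / 4 - (Real.log (N + 4) + 1) ≤ L r (N / m) := by
  have hm' : (0 : ℝ) < m := by exact_mod_cast hm
  have hm1 : (1 : ℝ) ≤ m := by exact_mod_cast hm
  have hv4 : 4 ≤ N / m := (Nat.le_div_iff_mul_le hm).2 hN
  obtain ⟨w, hw⟩ : ∃ w, N / m = w + 3 := ⟨N / m - 3, by omega⟩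
  have hw0 : (0 : ℝ) < w := by exact_mod_cast (by omega : 0 < w)
  have hlt : (N / m : ℝ) < w + 4 := by
    rw [div_lt_iff₀ hm']
    have := Nat.lt_mul_div_succ N hm
    rw [hw] at this
    have h' : (N : ℝ) < m * (w + 3 + 1) := by exact_mod_cast this
    linarith
  have hge : (1 : ℝ) ≤ N / m := by
    rw [le_div_iff₀ hm']
    have : (4 * m : ℝ) ≤ N := by exact_mod_cast hN
    linarith
  have h1 := le_L r hr w (by omega)
  have h2 := h_sub_le (a := (w : ℝ)) (b := (N / m : ℝ)) hw0 (by linarith)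
  have h3 : Real.log (N / m : ℝ) ≤ Real.log (N + 4) :=
    Real.log_le_log (by linarith) (by
      have : (N / m : ℝ) ≤ N := div_le_self N.cast_nonneg hm1
      linarith)
  have h4 : 0 ≤ Real.log (N / m : ℝ) := Real.log_nonneg hge
  have h5 : ((N / m : ℝ) - w) * Real.log (N / m : ℝ) ≤ 4 * Real.log (N / m : ℝ) :=
    mul_le_mul_of_nonneg_right (by linarith) h4
  rw [hw]
  linarith

/-- The combination of logarithmic sums whose leading terms `N log N` cancel. -/
noncomputable def F (N : ℕ) : ℝ :=
  L 3 N - L 3 (N / 2) - L 1 (N / 3) - L 3 (N / 4) + L 1 (N / 12)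

theorem le_F (N : ℕ) (hN : 48 ≤ N) :
    (5 / 24 * Real.log 2 + Real.log 3 / 16) * N - 5 * (Real.log (N + 4) + 1) ≤ F N := by
  have hN' : (N : ℝ) ≠ 0 := by exact_mod_cast (by omega : N ≠ 0)
  have e1 := le_L_div 3 (by norm_num) N 1 (by norm_num) (by omega)
  have e2 := L_div_le 3 (by norm_num) N 2 (by omega) (by norm_num)
  have e3 := L_div_le 1 (by norm_num) N 3 (by omega) (by norm_num)
  have e4 := L_div_le 3 (by norm_num) N 4 (by omega) (by norm_num)
  have e5 := le_L_div 1 (by norm_num) N 12 (by norm_num) (by omega)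
  have h4 : Real.log 4 = 2 * Real.log 2 := by
    rw [show (4 : ℝ) = 2 ^ 2 by norm_num, Real.log_pow]; norm_num
  have h12 : Real.log 12 = 2 * Real.log 2 + Real.log 3 := by
    rw [← h4, ← Real.log_mul (by norm_num) (by norm_num)]; norm_num
  unfold h at e1 e2 e3 e4 e5
  push_cast at e1 e2 e3 e4 e5
  rw [Real.log_div hN' (by norm_num)] at e1 e2 e3 e4 e5
  rw [Nat.div_one, Real.log_one] at e1
  rw [h4] at e4
  rw [h12] at e5
  unfold F
  linarith

/-! ### The weights in the combination -/

theorem weight_le_one (j u : ℕ) :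
    (cnt 3 j u : ℤ) - cnt 3 j (u / 2) - cnt 1 j (u / 3) - cnt 3 j (u / 4) + cnt 1 j (u / 12) ≤
      1 := by
  -- The left-hand side has period `48` in `u`.
  obtain ⟨q, t, ht, rfl⟩ : ∃ q t, t < 48 ∧ u = 48 * q + t :=
    ⟨u / 48, u % 48, Nat.mod_lt _ (by norm_num), (Nat.div_add_mod u 48).symm⟩
  unfold cnt
  split_ifs
  · interval_cases t <;> omega
  · interval_cases t <;> omega
  · simp

/-- The bound on the weight of `Λ d` in `F N`, where `j = d % 4` and `u = N / d`. -/
theorem weight_le (j u : ℕ) :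
    (cnt 3 j u : ℤ) - cnt 3 j (u / 2) - cnt 1 j (u / 3) - cnt 3 j (u / 4) + cnt 1 j (u / 12) ≤
      (if j = 3 ∧ u = 1 then 1 else 0) + (if 9 ≤ u then 1 else 0) := by
  by_cases hu : 9 ≤ u
  · have := weight_le_one j u
    split_ifs <;> omega
  · unfold cnt
    interval_cases u <;> split_ifs <;> omega

theorem F_eq (N : ℕ) : F N = ∑ d ∈ Ioc 0 N, Λ d *
    (((cnt 3 (d % 4) (N / d) : ℤ) - cnt 3 (d % 4) (N / d / 2) - cnt 1 (d % 4) (N / d / 3)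
      - cnt 3 (d % 4) (N / d / 4) + cnt 1 (d % 4) (N / d / 12) : ℤ) : ℝ) := by
  have e1 := L_div_eq 3 (by norm_num) N 1
  simp only [Nat.div_one] at e1
  rw [F, e1, L_div_eq 3 (by norm_num) N 2, L_div_eq 1 (by norm_num) N 3,
    L_div_eq 3 (by norm_num) N 4, L_div_eq 1 (by norm_num) N 12,
    ← sum_sub_distrib, ← sum_sub_distrib, ← sum_sub_distrib, ← sum_add_distrib]
  refine sum_congr rfl fun d _ => ?_
  push_cast
  ring

theorem F_le (n : ℕ) (hno : ∀ p : ℕ, p.Prime → n < p → p ≤ 2 * n → p % 4 ≠ 3) :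
    F (2 * n) ≤ (Chebyshev.psi ((2 * n : ℕ) : ℝ) - Chebyshev.theta ((2 * n : ℕ) : ℝ)) +
      Chebyshev.psi ((2 * n / 9 : ℕ) : ℝ) := by
  have hψ : Chebyshev.psi ((2 * n / 9 : ℕ) : ℝ) =
      ∑ d ∈ Ioc 0 (2 * n), if 9 ≤ 2 * n / d then Λ d else 0 := by
    rw [Chebyshev.psi, Nat.floor_natCast, ← sum_filter]
    refine sum_congr ?_ fun _ _ => rfl
    ext d
    simp only [mem_Ioc, mem_filter]
    constructor
    · rintro ⟨h0, h9⟩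
      refine ⟨⟨h0, by omega⟩, ?_⟩
      rw [Nat.le_div_iff_mul_le h0]; omega
    · rintro ⟨⟨h0, _⟩, h9⟩
      rw [Nat.le_div_iff_mul_le h0] at h9
      exact ⟨h0, by omega⟩
  rw [F_eq, Chebyshev.psi_sub_theta_eq_sum_not_prime, Nat.floor_natCast, sum_filter, hψ,
    ← sum_add_distrib]
  refine sum_le_sum fun d hd => ?_
  rw [mem_Ioc] at hd
  have hw := weight_le (d % 4) (2 * n / d)
  have hw' := mul_le_mul_of_nonneg_left (Int.cast_le (R := ℝ).2 hw)
    (vonMangoldt_nonneg (n := d))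
  refine hw'.trans ?_
  have hΛ := vonMangoldt_nonneg (n := d)
  push_cast
  rw [mul_add]
  refine add_le_add ?_ (by split_ifs <;> simp)
  by_cases hp : d.Prime
  -- `2 * n / d = 1` means `n < d`, so a prime `d ≡ 3 (mod 4)` is excluded by hypothesis.
  · rw [if_neg, if_neg]
    · simp
    · simpa using hp
    · rintro ⟨h3, h1⟩
      refine hno d hp ?_ hd.2 h3
      have := Nat.lt_mul_div_succ (2 * n) hd.1
      rw [h1] at this
      omega
  · rw [if_pos hp]
    split_ifs <;> simp [hΛ]

/-! ### Conclusion -/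

/-- The constant `2 ^ 19` comes from `N = 2 * n = s ^ 4` with `s ≥ 32`, the range in which
`0.055 * s ^ 4` exceeds the error terms estimated through `log N ≤ s / 4 + 8`. -/
theorem large (n : ℕ) (hn : 2 ^ 19 ≤ n) :
    ∃ p : ℕ, p.Prime ∧ n < p ∧ p ≤ 2 * n ∧ p % 4 = 3 := by
  by_contra hcon
  have hno : ∀ p : ℕ, p.Prime → n < p → p ≤ 2 * n → p % 4 ≠ 3 :=
    fun p h1 h2 h3 h4 => hcon ⟨p, h1, h2, h3, h4⟩
  have hup := F_le n hno
  have hlow := le_F (2 * n) (by omega)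
  have hN : ((2 : ℝ) ^ 20) ≤ ((2 * n : ℕ) : ℝ) := by
    exact_mod_cast (by omega : 2 ^ 20 ≤ 2 * n)
  have hθ := Chebyshev.psi_sub_theta_le (x := ((2 * n : ℕ) : ℝ)) (by linarith)
  have hmono : Chebyshev.psi ((2 * n / 9 : ℕ) : ℝ) ≤
      Chebyshev.psi (((2 * n : ℕ) : ℝ) / 9) := Chebyshev.psi_mono (by
        have := Nat.cast_div_le (α := ℝ) (m := 2 * n) (n := 9)
        exact_mod_cast this)
  have hψ := Chebyshev.psi_le (x := ((2 * n : ℕ) : ℝ) / 9) (by linarith)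
  generalize ((2 * n : ℕ) : ℝ) = N at *
  have hN0 : 0 < N := by linarith
  have h9 : √(N / 9) = √N / 3 := by
    rw [Real.sqrt_div hN0.le, show (9 : ℝ) = 3 ^ 2 by norm_num, Real.sqrt_sq (by norm_num)]
  have hl9 : Real.log (N / 9) ≤ Real.log N := Real.log_le_log (by positivity) (by linarith)
  have hl4 : Real.log (N + 4) ≤ Real.log N + 1 := by
    have h1 : Real.log (N + 4) ≤ Real.log (2 * N) :=
      Real.log_le_log (by linarith) (by linarith)
    rw [Real.log_mul (by norm_num) hN0.ne'] at h1
    linarith [Real.log_two_lt_d9]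
  have h4 : Real.log 4 = 2 * Real.log 2 := by
    rw [show (4 : ℝ) = 2 ^ 2 by norm_num, Real.log_pow]; norm_num
  have h3 : 3 * Real.log 2 ≤ 2 * Real.log 3 := by
    have := Real.log_le_log (by norm_num) (by norm_num : (2 : ℝ) ^ 3 ≤ 3 ^ 2)
    rw [Real.log_pow, Real.log_pow] at this
    exact_mod_cast this
  obtain ⟨s, hs, hsN⟩ : ∃ s : ℝ, 32 ≤ s ∧ N = s ^ 4 := by
    refine ⟨√√N, ?_, ?_⟩
    · refine Real.le_sqrt_of_sq_le (Real.le_sqrt_of_sq_le ?_)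
      norm_num at hN ⊢
      exact hN
    · rw [show (√√N) ^ 4 = ((√√N) ^ 2) ^ 2 by ring, Real.sq_sqrt (Real.sqrt_nonneg _),
        Real.sq_sqrt hN0.le]
  have hsq : √N = s ^ 2 := by
    rw [hsN, show s ^ 4 = (s ^ 2) ^ 2 by ring, Real.sqrt_sq (by positivity)]
  have hlog : Real.log N ≤ s / 4 + 8 := by
    have h1 := Real.log_le_sub_one_of_pos (show 0 < s / 16 by linarith)
    rw [Real.log_div (by linarith) (by norm_num), show (16 : ℝ) = 2 ^ 4 by norm_num,
      Real.log_pow] at h1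
    rw [hsN, Real.log_pow]
    push_cast at h1 ⊢
    linarith [Real.log_two_lt_d9]
  -- The coefficient `23 / 288` is `5/24 + 3/32 - 2/9`, using `log 3 ≥ 3/2 * log 2`.
  have hmain : (23 / 288 * 0.6931 : ℝ) * N ≤
      (5 / 24 * Real.log 2 + Real.log 3 / 16) * N - Real.log 4 * (N / 9) := by
    have : (23 / 288 * 0.6931 : ℝ) ≤
        5 / 24 * Real.log 2 + Real.log 3 / 16 - Real.log 4 / 9 := by
      linarith [Real.log_two_gt_d9]
    nlinarith
  have hA : 2 * √(N / 9) * Real.log (N / 9) ≤ 2 / 3 * (s ^ 2 * Real.log N) := by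
    rw [h9, hsq]
    have := mul_le_mul_of_nonneg_left hl9 (sq_nonneg s)
    linarith
  have hB : s ^ 2 * Real.log N ≤ s ^ 2 * (s / 4 + 8) :=
    mul_le_mul_of_nonneg_left hlog (sq_nonneg s)
  rw [hsq] at hθ
  have hfin : (23 / 288 * 0.6931 : ℝ) * s ^ 4 ≤
      8 / 3 * (s ^ 2 * (s / 4 + 8)) + 5 * (s / 4 + 10) := by
    rw [← hsN]
    linarith
  nlinarith [mul_nonneg (sq_nonneg s) (sub_nonneg.2 hs), mul_nonneg (mul_nonneg (sq_nonneg s) (sub_nonneg.2 hs)) (sub_nonneg.2 hs), mul_nonneg (sub_nonneg.2 hs) (sub_nonneg.2 hs)]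

/-- One link of the descending chain of primes. -/
theorem step {n : ℕ} (q : ℕ) {p : ℕ} (hp : p.Prime) (hp3 : p % 4 = 3) (hpq : p ≤ 2 * q)
    (H : n < q → ∃ p : ℕ, p.Prime ∧ n < p ∧ p ≤ 2 * n ∧ p % 4 = 3) (hn : n < p) :
    ∃ p : ℕ, p.Prime ∧ n < p ∧ p ≤ 2 * n ∧ p % 4 = 3 := by
  by_cases h : n < q
  · exact H h
  · exact ⟨p, hp, hn, by omega, hp3⟩

end Breusch


/-- Breusch's strengthening of Bertrand's postulate: for every `n ≥ 4` there is a prime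
`p` with `n < p ≤ 2n` and `p ≡ 3 (mod 4)`. -/
theorem breusch_bertrand (n : ℕ) (hn : 4 ≤ n) :
    ∃ p : ℕ, p.Prime ∧ n < p ∧ p ≤ 2 * n ∧ p % 4 = 3 := by
  by_cases hlarge : 2 ^ 19 ≤ n
  · exact Breusch.large n hlarge
  have hsmall : n < 830191 := by omega
  revert hsmall
  refine Breusch.step 415111 (by norm_num1) (by norm_num1) (by norm_num1) ?_
  refine Breusch.step 207563 (by norm_num1) (by norm_num1) (by norm_num1) ?_
  refine Breusch.step 103787 (by norm_num1) (by norm_num1) (by norm_num1) ?_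
  refine Breusch.step 51899 (by norm_num1) (by norm_num1) (by norm_num1) ?_
  refine Breusch.step 25951 (by norm_num1) (by norm_num1) (by norm_num1) ?_
  refine Breusch.step 12979 (by norm_num1) (by norm_num1) (by norm_num1) ?_
  refine Breusch.step 6491 (by norm_num1) (by norm_num1) (by norm_num1) ?_
  refine Breusch.step 3251 (by norm_num1) (by norm_num1) (by norm_num1) ?_
  refine Breusch.step 1627 (by norm_num1) (by norm_num1) (by norm_num1) ?_
  refine Breusch.step 827 (by norm_num1) (by norm_num1) (by norm_num1) ?_
  refine Breusch.step 419 (by norm_num1) (by norm_num1) (by norm_num1) ?_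
  refine Breusch.step 211 (by norm_num1) (by norm_num1) (by norm_num1) ?_
  refine Breusch.step 107 (by norm_num1) (by norm_num1) (by norm_num1) ?_
  refine Breusch.step 59 (by norm_num1) (by norm_num1) (by norm_num1) ?_
  refine Breusch.step 31 (by norm_num1) (by norm_num1) (by norm_num1) ?_
  refine Breusch.step 19 (by norm_num1) (by norm_num1) (by norm_num1) ?_
  refine Breusch.step 11 (by norm_num1) (by norm_num1) (by norm_num1) ?_
  refine Breusch.step 7 (by norm_num1) (by norm_num1) (by norm_num1) ?_
  exact fun h => ⟨7, by norm_num1, h, by omega, by norm_num1⟩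
end

section
/- Let L be a moment functional on ℂ[X] with a family (Φ_l)_{l≥0} of orthogonal polynomials (deg Φ_l = l, L(Φ_l·Φ_m) = 0 for l ≠ m, L(Φ_l²) ≠ 0). Let r ≥ 0, let z₁,…,z_{r+1} ∈ ℂ be pairwise distinct, and suppose x₁,…,x_{r+1} ∈ ℂ satisfy ∑_{i=1}^{r+1} x_i f(z_i) = L(f) for every f ∈ ℂ[X] with deg f ≤ 2r. Then for all i ≠ j, Φ_{r+1}(z_i)·Φ_r(z_j) = Φ_r(z_i)·Φ_{r+1}(z_j); that is, f_r(z_i, z_j) = 0 where f_r(x,y) = (Φ_{r+1}(x)Φ_r(y) − Φ_r(x)Φ_{r+1}(y))/(x−y). -/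
/-!
Let `W = ∏ (X - z_i)` be the nodal polynomial, of degree `r + 1`. For `l < r` the product
`W * Φ_l` has degree at most `2r` and vanishes at every node, so the quadrature formula gives
`L (W * Φ_l) = 0`. Expanding `W` in the basis `(Φ_l)` (`exists_expansion`), orthogonality
therefore leaves only `W = a Φ_r + b Φ_{r+1}`, with `b ≠ 0` for degree reasons. Evaluating at the
nodes, `Φ_{r+1}(z_i) = -(a / b) Φ_r(z_i)` with a ratio independent of `i`, which makes
`Φ_{r+1}(z_i) Φ_r(z_j)` symmetric in `i` and `j`.
-/

open Polynomial Finset in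
/-- A sequence of nonzero polynomials with `Φ l` of degree `l` is triangular, hence spans: every
polynomial of degree less than `n` is a combination of `Φ 0, …, Φ (n - 1)`. -/
theorem exists_expansion (Φ : ℕ → Polynomial ℂ) (hdeg : ∀ l, (Φ l).natDegree = l)
    (hne : ∀ l, Φ l ≠ 0) (n : ℕ) :
    ∀ f : Polynomial ℂ, f.degree < n → ∃ c : ℕ → ℂ, f = ∑ l ∈ range n, C (c l) * Φ l := by
  induction n with
  | zero =>
    intro f hf
    refine ⟨0, ?_⟩
    simpa using hf
  | succ n ih =>
    intro f hf
    have hlc : (Φ n).coeff n ≠ 0 := by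
      have h := leadingCoeff_ne_zero.mpr (hne n)
      rwa [leadingCoeff, hdeg] at h
    set b := f.coeff n / (Φ n).coeff n with hb
    have hlow : (f - C b * Φ n).degree < n := by
      rw [degree_lt_iff_coeff_zero] at hf ⊢
      intro m hm
      rw [coeff_sub, coeff_C_mul]
      rcases hm.eq_or_lt with rfl | hlt
      · rw [hb, div_mul_cancel₀ _ hlc, sub_self]
      · rw [hf m hlt, coeff_eq_zero_of_natDegree_lt (by rw [hdeg]; exact hlt)]
        simp
    obtain ⟨c, hc⟩ := ih _ hlow
    refine ⟨Function.update c n b, ?_⟩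
    rw [sum_range_succ, Function.update_self, eq_add_of_sub_eq hc]
    congr 1
    refine sum_congr rfl fun l hl => ?_
    rw [Function.update_of_ne (mem_range.mp hl).ne]

open Polynomial Finset in
/-- If `x₁, …, x_{r+1}`, `z₁, …, z_{r+1}` give a quadrature formula of degree `2r` for a
moment functional `L` with orthogonal polynomials `(Φ_l)` and the nodes are pairwise
distinct, then `f_r(z_i, z_j) = 0` for all `i ≠ j`, i.e.
`Φ_{r+1}(z_i) Φ_r(z_j) = Φ_r(z_i) Φ_{r+1}(z_j)`. -/
theorem christoffel_darboux_kernel_vanishes (L : Polynomial ℂ →ₗ[ℂ] ℂ)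
    (Φ : ℕ → Polynomial ℂ)
    (hdeg : ∀ l, (Φ l).natDegree = l)
    (horth : ∀ l m, l ≠ m → L (Φ l * Φ m) = 0)
    (hnonzero : ∀ l, L (Φ l ^ 2) ≠ 0)
    (r : ℕ) (z : Fin (r + 1) → ℂ) (hz : Function.Injective z)
    (x : Fin (r + 1) → ℂ)
    (hquad : ∀ f : Polynomial ℂ, f.natDegree ≤ 2 * r →
      ∑ i, x i * f.eval (z i) = L f) :
    ∀ i j, i ≠ j →
      (Φ (r + 1)).eval (z i) * (Φ r).eval (z j)
        = (Φ r).eval (z i) * (Φ (r + 1)).eval (z j) := by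
  have hne : ∀ l, Φ l ≠ 0 := fun l h => hnonzero l (by simp [h])
  set W : Polynomial ℂ := ∏ i, (X - C (z i)) with hW
  have hWdeg : W.natDegree = r + 1 := by
    simp [hW, natDegree_prod_of_monic _ _ fun i _ => monic_X_sub_C (z i)]
  have hWz : ∀ i, W.eval (z i) = 0 := fun i => by
    rw [hW, eval_prod]
    exact prod_eq_zero (mem_univ i) (by simp)
  have hWorth : ∀ l < r, L (W * Φ l) = 0 := fun l hl => by
    rw [← hquad _ (natDegree_mul_le.trans (by rw [hWdeg, hdeg]; omega))]
    simp [hWz]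
  obtain ⟨c, hc⟩ := exists_expansion Φ hdeg hne (r + 2) W
    (lt_of_le_of_lt degree_le_natDegree (by rw [hWdeg]; exact_mod_cast Nat.lt_succ_self _))
  have hc0 : ∀ l < r, c l = 0 := fun l hl => by
    have h := hWorth l hl
    rw [hc, sum_mul, map_sum, sum_eq_single l] at h
    · rw [mul_assoc, ← pow_two, ← smul_eq_C_mul, map_smul, smul_eq_mul] at h
      exact (mul_eq_zero.mp h).resolve_right (hnonzero l)
    · intro m _ hm
      rw [mul_assoc, ← smul_eq_C_mul, map_smul, horth m l hm, smul_zero]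
    · intro h'
      exact absurd (mem_range.mpr (by omega)) h'
  have hWeq : W = C (c r) * Φ r + C (c (r + 1)) * Φ (r + 1) := by
    rw [hc, sum_range_succ, sum_range_succ, sum_eq_zero, zero_add]
    intro l hl
    simp [hc0 l (mem_range.mp hl)]
  have hb : c (r + 1) ≠ 0 := fun h0 => by
    have h : W.natDegree ≤ r := by
      rw [hWeq, h0, C_0, zero_mul, add_zero]
      exact (natDegree_C_mul_le _ _).trans (hdeg r).le
    omega
  have hev : ∀ i, c r * (Φ r).eval (z i) + c (r + 1) * (Φ (r + 1)).eval (z i) = 0 := fun i => by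
    have h := hWz i
    rw [hWeq] at h
    simpa using h
  intro i j _
  apply mul_left_cancel₀ hb
  linear_combination (Φ r).eval (z j) * hev i - (Φ r).eval (z i) * hev j
end

section
/- For rational numbers s and y, the equation y² = −44s⁴ − 84s³ + s² + 84s + 43 holds if and only if (s, y) is one of the six pairs (1, 0), (−1, 0), (−1/2, 3), (−1/2, −3), (−9/10, 19/25), (−9/10, −19/25). In particular, the quartic 43 + 84s + s² − 84s³ − 44s⁴ is the square of a rational number if and only if s ∈ {1, −1, −1/2, −9/10}. -/
/-!
The quartic factors as `(1 - s²)(44 s² + 84 s + 43)`. For `s ≠ 1` the substitution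
`X = 171 (1 + s) / (1 - s)` sends a rational point of the curve to one of
`E : Y² = X (X² - 2 X + 513)`, and the theorem amounts to `X ∈ {0, 9, 57}`
(`weierstrass_points`).

For `X ≠ 0` in lowest terms, `X = d k² / e²` with `d` a squarefree divisor of `513`. Modulo `16`
the classes `d = 3` and `d = 19` are impossible, and translation by the 2-torsion point `(0, 0)`,
that is `X ↦ 513 / X`, exchanges `d = 57` with `d = 1`. So it remains to solve
`N² = M⁴ - 2 M² e² + 513 e⁴`, whose only solutions with `e ≠ 0` have `M² = 9 e²` (`descent`).

This is a Fermat descent along the 2-isogeny between `E` and `E' : y² = x (x² + 4 x - 2048)`.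
Since `N² = (M² - e²)² + 512 e⁴`, factoring a difference of squares gives a point of
`z² = w⁴ + 4 w² c² - 2048 c⁴` (`first_half`; the wrong classes die modulo `3`). Since
`z² = (w² + 2 c²)² - 2052 c⁴`, factoring again gives `c = r s` and a new point of the original
quartic, with denominator `s` (`second_half`; the wrong classes die modulo `16`). As `s ∣ c ∣ e`,
the denominator drops unless `s = e`, and that case is solved directly.
-/

/-! ### Factors of a multiple of a fourth power, and local obstructions -/

/-- Coprime factors of `d * c ^ 4` are `d₁ * r ^ 4` and `d₂ * s ^ 4` with `d₁ * d₂ = d` and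
`r * s = c`; one takes `d₁ = gcd d A`, `r = gcd c A`, and likewise for `B`. -/
theorem split_fourth_nat {A B d c : ℕ} (hA : 0 < A) (hAB : Nat.Coprime A B)
    (h : A * B = d * c ^ 4) :
    ∃ d₁ d₂ r s : ℕ, d₁ * d₂ = d ∧ Nat.Coprime d₁ d₂ ∧ r * s = c ∧
      A = d₁ * r ^ 4 ∧ B = d₂ * s ^ 4 := by
  have hr : Nat.gcd c A * Nat.gcd c B = c := by
    rw [← Nat.Coprime.gcd_mul c hAB, h]
    exact Nat.gcd_eq_left ((dvd_pow_self c (by norm_num)).mul_left d)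
  have hd : Nat.gcd d A * Nat.gcd d B = d := by
    rw [← Nat.Coprime.gcd_mul d hAB, h]
    exact Nat.gcd_eq_left (dvd_mul_right d _)
  have h' : A * B = (Nat.gcd d A * Nat.gcd c A ^ 4) * (Nat.gcd d B * Nat.gcd c B ^ 4) := by
    calc A * B = d * c ^ 4 := h
      _ = (Nat.gcd d A * Nat.gcd d B) * (Nat.gcd c A * Nat.gcd c B) ^ 4 := by rw [hd, hr]
      _ = _ := by ring
  have c1 : Nat.Coprime A (Nat.gcd d B * Nat.gcd c B ^ 4) :=
    Nat.Coprime.mul_right (hAB.coprime_dvd_right (Nat.gcd_dvd_right _ _))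
      ((hAB.coprime_dvd_right (Nat.gcd_dvd_right _ _)).pow_right 4)
  have c2 : Nat.Coprime (Nat.gcd d A * Nat.gcd c A ^ 4) B :=
    Nat.Coprime.mul_left (hAB.coprime_dvd_left (Nat.gcd_dvd_right _ _))
      ((hAB.coprime_dvd_left (Nat.gcd_dvd_right _ _)).pow_left 4)
  have eA : A = Nat.gcd d A * Nat.gcd c A ^ 4 :=
    Nat.dvd_antisymm (c1.dvd_of_dvd_mul_right (h' ▸ dvd_mul_right A B))
      (c2.dvd_of_dvd_mul_right (h' ▸ dvd_mul_right _ _))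
  refine ⟨Nat.gcd d A, Nat.gcd d B, Nat.gcd c A, Nat.gcd c B, hd, ?_, hr, eA, ?_⟩
  · exact Nat.Coprime.coprime_dvd_left (Nat.gcd_dvd_right _ _)
      (hAB.coprime_dvd_right (Nat.gcd_dvd_right _ _))
  · rw [← eA] at h'
    exact Nat.eq_of_mul_eq_mul_left hA h'

theorem split_fourth {A B c : ℤ} {d : ℕ} (hA : 0 < A) (hB : 0 < B) (hc : 0 < c)
    (hAB : IsCoprime A B) (h : A * B = d * c ^ 4) :
    ∃ (d₁ d₂ : ℕ) (r s : ℤ), d₁ * d₂ = d ∧ Nat.Coprime d₁ d₂ ∧ 0 < r ∧ 0 < s ∧ r * s = c ∧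
      A = d₁ * r ^ 4 ∧ B = d₂ * s ^ 4 := by
  lift A to ℕ using hA.le
  lift B to ℕ using hB.le
  lift c to ℕ using hc.le
  obtain ⟨d₁, d₂, r, s, h1, h2, h3, h4, h5⟩ := split_fourth_nat (by exact_mod_cast hA)
    (Nat.isCoprime_iff_coprime.1 hAB) (d := d) (c := c) (by exact_mod_cast h)
  have hc' : 0 < r * s := by rw [h3]; exact_mod_cast hc
  refine ⟨d₁, d₂, r, s, h1, h2, ?_, ?_, by exact_mod_cast h3, by exact_mod_cast h4,
    by exact_mod_cast h5⟩
  · exact_mod_cast Nat.pos_of_mul_pos_right hc'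
  · exact_mod_cast Nat.pos_of_mul_pos_left hc'

theorem isCoprime_of_no_prime {A B : ℤ}
    (h : ∀ p : ℕ, p.Prime → (p : ℤ) ∣ A → (p : ℤ) ∣ B → False) : IsCoprime A B := by
  rw [Int.isCoprime_iff_gcd_eq_one]
  by_contra hne
  obtain ⟨p, hp, hd⟩ := Nat.exists_prime_and_dvd hne
  have hd' : (p : ℤ) ∣ (Int.gcd A B : ℤ) := by exact_mod_cast hd
  exact h p hp (hd'.trans (Int.gcd_dvd_left _ _)) (hd'.trans (Int.gcd_dvd_right _ _))

theorem not_prime_dvd_both {A B : ℤ} (h : IsCoprime A B) {p : ℕ} (hp : p.Prime)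
    (hA : (p : ℤ) ∣ A) (hB : (p : ℤ) ∣ B) : False :=
  (Nat.prime_iff_prime_int.1 hp).not_isUnit (h.isUnit_of_dvd' hA hB)

/-- Modulo `3`, `-a⁴ + a²b² + 2b⁴` is a square only when `3` divides both `a` and `b`. -/
theorem no_sol_mod_three {m a b : ℤ} (hab : IsCoprime a b)
    (h : (3 : ℤ) ∣ m ^ 2 - (-a ^ 4 + a ^ 2 * b ^ 2 + 2 * b ^ 4)) : False := by
  have key : ∀ x y z : ZMod 3, z ^ 2 - (-x ^ 4 + x ^ 2 * y ^ 2 + 2 * y ^ 4) = 0 →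
      x = 0 ∧ y = 0 := by decide
  have h' := (ZMod.intCast_zmod_eq_zero_iff_dvd _ 3).2 h
  push_cast at h'
  obtain ⟨h1, h2⟩ := key _ _ _ h'
  exact not_prime_dvd_both hab Nat.prime_three ((ZMod.intCast_zmod_eq_zero_iff_dvd _ 3).1 h1)
    ((ZMod.intCast_zmod_eq_zero_iff_dvd _ 3).1 h2)

/-- Modulo `16`, `3a⁴ - 2a²b² + 11b⁴` is a square only when `a` and `b` are both even. -/
theorem no_sol_mod_sixteen {n a b : ℤ} (hab : IsCoprime a b)
    (h : (16 : ℤ) ∣ n ^ 2 - (3 * a ^ 4 - 2 * a ^ 2 * b ^ 2 + 11 * b ^ 4)) : False := by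
  -- in `ZMod 16`, the condition `8 * x = 0` says that `x` is even
  have key : ∀ x y z : ZMod 16, z ^ 2 - (3 * x ^ 4 - 2 * x ^ 2 * y ^ 2 + 11 * y ^ 4) = 0 →
      8 * x = 0 ∧ 8 * y = 0 := by decide +kernel
  have h' := (ZMod.intCast_zmod_eq_zero_iff_dvd _ 16).2 h
  push_cast at h'
  obtain ⟨h1, h2⟩ := key _ _ _ h'
  have e1 : (16 : ℤ) ∣ 8 * a := (ZMod.intCast_zmod_eq_zero_iff_dvd _ 16).1 (by push_cast; exact h1)
  have e2 : (16 : ℤ) ∣ 8 * b := (ZMod.intCast_zmod_eq_zero_iff_dvd _ 16).1 (by push_cast; exact h2)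
  exact not_prime_dvd_both hab Nat.prime_two (by push_cast; omega) (by push_cast; omega)

/-! ### The two halves of the descent -/

/-- The isogeny step from `E'` back to `E`. The halves `A`, `B` of `w² + 2c² ∓ z` are positive with
`A * B = 513 c⁴`, and `3` is the only prime they can share. If they are coprime the first
alternative holds, otherwise the second. The latter is also a point of the original quartic, with
`M = 3 r`, `e = s`, because `9 * 57 = 513`. -/
theorem second_half {w c z : ℤ} (hwc : IsCoprime w c) (hc : 0 < c)
    (h : z ^ 2 = w ^ 4 + 4 * w ^ 2 * c ^ 2 - 2048 * c ^ 4) :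
    ∃ r s : ℤ, 0 < r ∧ 0 < s ∧ r * s = c ∧ IsCoprime r s ∧
      (w ^ 2 = r ^ 4 - 2 * r ^ 2 * s ^ 2 + 513 * s ^ 4 ∨
       w ^ 2 = 9 * r ^ 4 - 2 * r ^ 2 * s ^ 2 + 57 * s ^ 4) := by
  have hpar : Even (w ^ 2 + 2 * c ^ 2 - z) := by
    have : Even (z ^ 2) ↔ Even (w ^ 4) := by
      have h4 : Even (4 : ℤ) := by decide
      have h2048 : Even (2048 : ℤ) := by decide
      rw [h]; simp [h4, h2048, parity_simps]
    simp only [parity_simps] at this ⊢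
    simp at this ⊢
    tauto
  obtain ⟨A, hA⟩ := hpar
  obtain ⟨B, hB⟩ : ∃ B, B = A + z := ⟨_, rfl⟩
  have hsum : A + B = w ^ 2 + 2 * c ^ 2 := by linarith
  have hprod : A * B = 513 * c ^ 4 := by
    have h2 : z = B - A := by linarith
    have h1 : w ^ 2 = A + B - 2 * c ^ 2 := by linarith
    have h3 : w ^ 4 = (A + B - 2 * c ^ 2) ^ 2 := by rw [← h1]; ring
    rw [h3, h1, h2] at h
    linarith
  have hc4 : 0 < c ^ 4 := by positivity
  have hc2 : 0 < c ^ 2 := by positivity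
  have hApos : 0 < A := by
    by_contra hn
    nlinarith [sq_nonneg w]
  have hBpos : 0 < B := by
    by_contra hn
    nlinarith [sq_nonneg w]
  -- a prime dividing both factors cannot divide `c`, since it would then divide `w`
  have hpc : ∀ p : ℕ, p.Prime → (p : ℤ) ∣ A → (p : ℤ) ∣ B → IsCoprime ((p : ℤ) ^ 2) (c ^ 4) := by
    intro p hp h1 h2
    have hpi := Nat.prime_iff_prime_int.1 hp
    refine IsCoprime.pow ((Prime.coprime_iff_not_dvd hpi).2 fun h3 => ?_)
    have h4 : (p : ℤ) ∣ w ^ 2 := by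
      have : w ^ 2 = A + B - 2 * c * c := by linarith
      rw [this]
      exact dvd_sub (dvd_add h1 h2) (h3.mul_left _)
    exact not_prime_dvd_both hwc hp (hpi.dvd_of_dvd_pow h4) h3
  have hrs : ∀ {r s : ℤ}, r * s = c → IsCoprime (r ^ 4) (s ^ 4) → IsCoprime r s := fun _ hh =>
    (IsCoprime.pow_iff (by norm_num) (by norm_num)).1 hh
  by_cases h3 : (3 : ℤ) ∣ A ∧ (3 : ℤ) ∣ B
  · obtain ⟨⟨A, rfl⟩, ⟨B, rfl⟩⟩ := h3
    have hprod' : A * B = (57 : ℕ) * c ^ 4 := by push_cast; linarith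
    have hcop : IsCoprime A B := by
      refine isCoprime_of_no_prime fun p hp h1 h2 => ?_
      have := (hpc p hp (h1.mul_left _) (h2.mul_left _)).dvd_of_dvd_mul_right
        (by rw [← hprod', sq]; exact mul_dvd_mul h1 h2)
      have h57 : p ^ 2 ∣ 57 := by exact_mod_cast this
      have : p < 8 := by nlinarith [Nat.le_of_dvd (by norm_num) h57]
      interval_cases p <;> revert h57 hp <;> norm_num
    obtain ⟨d₁, d₂, r, s, hd, -, hr, hs, hc, rfl, rfl⟩ :=
      split_fourth (by linarith) (by linarith) hc hcop hprod'
    have hcrs := hrs hc (hcop.of_mul_left_right.of_mul_right_right)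
    have hd1 : d₁ ∈ Nat.divisors 57 := Nat.mem_divisors.2 ⟨⟨d₂, hd.symm⟩, by norm_num⟩
    rw [show Nat.divisors 57 = {1, 3, 19, 57} by decide +kernel] at hd1
    simp only [Finset.mem_insert, Finset.mem_singleton] at hd1
    rcases hd1 with rfl | rfl | rfl | rfl
    · obtain rfl : d₂ = 57 := by omega
      push_cast at hsum
      rw [← hc] at hsum
      exact (no_sol_mod_sixteen (n := w) hcrs ⟨10 * s ^ 4, by linarith⟩).elim
    · obtain rfl : d₂ = 19 := by omega
      push_cast at hsum
      rw [← hc] at hsum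
      exact ⟨r, s, hr, hs, hc, hcrs, Or.inr (by linarith)⟩
    · obtain rfl : d₂ = 3 := by omega
      push_cast at hsum
      rw [← hc] at hsum
      exact ⟨s, r, hs, hr, by linarith, hcrs.symm, Or.inr (by linarith)⟩
    · obtain rfl : d₂ = 1 := by omega
      push_cast at hsum
      rw [← hc] at hsum
      exact (no_sol_mod_sixteen (n := w) hcrs.symm ⟨10 * r ^ 4, by linarith⟩).elim
  · have hprod' : A * B = (513 : ℕ) * c ^ 4 := by push_cast; linarith
    have hcop : IsCoprime A B := by
      refine isCoprime_of_no_prime fun p hp h1 h2 => ?_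
      have := (hpc p hp h1 h2).dvd_of_dvd_mul_right
        (by rw [← hprod', sq]; exact mul_dvd_mul h1 h2)
      have h513 : p ^ 2 ∣ 513 := by exact_mod_cast this
      have : p < 23 := by nlinarith [Nat.le_of_dvd (by norm_num) h513]
      have hp3 : p ≠ 3 := by rintro rfl; exact h3 ⟨h1, h2⟩
      clear h1 h2
      interval_cases p <;> revert h513 hp hp3 <;> norm_num
    obtain ⟨d₁, d₂, r, s, hd, hdc, hr, hs, hc, rfl, rfl⟩ :=
      split_fourth hApos hBpos hc hcop hprod'
    have hcrs := hrs hc (hcop.of_mul_left_right.of_mul_right_right)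
    have hd1 : d₁ ∈ Nat.divisors 513 := Nat.mem_divisors.2 ⟨⟨d₂, hd.symm⟩, by norm_num⟩
    rw [show Nat.divisors 513 = {1, 3, 9, 27, 19, 57, 171, 513} by decide +kernel] at hd1
    simp only [Finset.mem_insert, Finset.mem_singleton] at hd1
    rcases hd1 with rfl | rfl | rfl | rfl | rfl | rfl | rfl | rfl
    · obtain rfl : d₂ = 513 := by omega
      push_cast at hsum
      rw [← hc] at hsum
      exact ⟨r, s, hr, hs, hc, hcrs, Or.inl (by linarith)⟩
    · obtain rfl : d₂ = 171 := by omega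
      norm_num at hdc
    · obtain rfl : d₂ = 57 := by omega
      norm_num at hdc
    · obtain rfl : d₂ = 19 := by omega
      push_cast at hsum
      rw [← hc] at hsum
      exact (no_sol_mod_sixteen (n := w) hcrs.symm ⟨s ^ 4 + r ^ 4, by linarith⟩).elim
    · obtain rfl : d₂ = 27 := by omega
      push_cast at hsum
      rw [← hc] at hsum
      exact (no_sol_mod_sixteen (n := w) hcrs ⟨s ^ 4 + r ^ 4, by linarith⟩).elim
    · obtain rfl : d₂ = 9 := by omega
      norm_num at hdc
    · obtain rfl : d₂ = 3 := by omega
      norm_num at hdc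
    · obtain rfl : d₂ = 1 := by omega
      push_cast at hsum
      rw [← hc] at hsum
      exact ⟨s, r, hs, hr, by linarith, hcrs.symm, Or.inl (by linarith)⟩

/-- The isogeny step from `E` to `E'`, obtained from
`(N - (M² - e²)) (N + (M² - e²)) = 512 e⁴`. If `M` and `e` have opposite parity then `e` is even
and `w` is odd; if both are odd then `8 ∣ w`, and the factor `16` in `z = 16 * M` comes from
clearing denominators. -/
theorem first_half {M e N : ℤ} (hMe : IsCoprime M e) (he : 0 < e)
    (h : N ^ 2 = M ^ 4 - 2 * M ^ 2 * e ^ 2 + 513 * e ^ 4) :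
    ∃ w c z : ℤ, IsCoprime w c ∧ 0 < c ∧ z ^ 2 = w ^ 4 + 4 * w ^ 2 * c ^ 2 - 2048 * c ^ 4 ∧
      ((Odd w ∧ e = 2 * w * c) ∨ ∃ b, 0 < b ∧ w = 8 * b ∧ e = b * c ∧ z = 16 * M) := by
  wlog hN : 0 ≤ N generalizing N
  · exact this (N := -N) (by linarith [neg_sq N]) (by linarith)
  have he4 : 0 < e ^ 4 := by positivity
  obtain ⟨u, hu⟩ : ∃ u, u = M ^ 2 - e ^ 2 := ⟨_, rfl⟩
  have hNu : N ^ 2 = u ^ 2 + 512 * e ^ 4 := by rw [hu, h]; ring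
  have hlt : |u| < N := abs_lt_of_sq_lt_sq (by linarith) hN
  obtain ⟨hl1, hl2⟩ := abs_lt.1 hlt
  have hMe2 : ∀ p : ℕ, p.Prime → (p : ℤ) ∣ e → (p : ℤ) ∣ u → False := by
    intro p hp h1 h2
    have h4 : (p : ℤ) ∣ M ^ 2 := by
      have : M ^ 2 = u + e * e := by rw [hu]; ring
      rw [this]
      exact dvd_add h2 (h1.mul_left _)
    exact not_prime_dvd_both hMe hp ((Nat.prime_iff_prime_int.1 hp).dvd_of_dvd_pow h4) h1
  by_cases hodd : Odd M ∧ Odd e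
  · obtain ⟨hMo, heo⟩ := hodd
    obtain ⟨k, hk⟩ : (8 : ℤ) ∣ u := by
      have h1 := Int.eight_dvd_sq_sub_one_of_odd hMo
      have h2 := Int.eight_dvd_sq_sub_one_of_odd heo
      rw [hu]; omega
    obtain ⟨n, rfl⟩ : (8 : ℤ) ∣ N := by
      have : (8 : ℤ) ^ 2 ∣ N ^ 2 := ⟨k ^ 2 + 8 * e ^ 4, by rw [hNu, hk]; ring⟩
      exact (Int.pow_dvd_pow_iff (by norm_num)).1 this
    have hnk : n ^ 2 = k ^ 2 + 8 * e ^ 4 := by rw [hk] at hNu; linarith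
    obtain ⟨A, hA⟩ : Even (n - k) := by
      have : Even (n ^ 2) ↔ Even (k ^ 2) := by
        have h8 : Even (8 : ℤ) := by decide
        rw [hnk]; simp [h8, parity_simps]
      simp only [parity_simps] at this ⊢
      simpa using this
    obtain ⟨B, hB⟩ : ∃ B, B = A + k := ⟨_, rfl⟩
    have hAB : A * B = (2 : ℕ) * e ^ 4 := by
      have h1 : n = A + B := by linarith
      have h2 : k = B - A := by linarith
      rw [h1, h2] at hnk
      push_cast
      linarith
    have hcop : IsCoprime A B := by
      refine isCoprime_of_no_prime fun p hp h1 h2 => ?_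
      have hpi := Nat.prime_iff_prime_int.1 hp
      have hpu : (p : ℤ) ∣ u := by
        have : u = 8 * (B - A) := by linarith
        rw [this]; exact (dvd_sub h2 h1).mul_left _
      have hpe : IsCoprime ((p : ℤ) ^ 2) (e ^ 4) :=
        IsCoprime.pow ((Prime.coprime_iff_not_dvd hpi).2 fun h3 => hMe2 p hp h3 hpu)
      have := hpe.dvd_of_dvd_mul_right (by rw [← hAB, sq]; exact mul_dvd_mul h1 h2)
      have h2' : p ^ 2 ∣ 2 := by exact_mod_cast this
      have := Nat.le_of_dvd (by norm_num) h2'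
      nlinarith [hp.two_le]
    obtain ⟨d₁, d₂, r, s, hd, -, hr, hs, hrs, rfl, rfl⟩ :=
      split_fourth (by linarith) (by linarith) he hcop hAB
    have hcrs : IsCoprime r s := (IsCoprime.pow_iff (by norm_num) (by norm_num)).1
      (hcop.of_mul_left_right.of_mul_right_right)
    have hM : M ^ 2 = r ^ 2 * s ^ 2 + 8 * (d₂ * s ^ 4 - d₁ * r ^ 4) := by
      rw [← hrs] at hu; linarith
    have hd1 : d₁ ≤ 2 := Nat.le_of_dvd (by norm_num) ⟨d₂, hd.symm⟩
    interval_cases d₁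
    · omega
    · obtain rfl : d₂ = 2 := by omega
      push_cast at hM
      refine ⟨8 * s, r, 16 * M, ?_, hr, ?_, Or.inr ⟨s, hs, rfl, by linarith, rfl⟩⟩
      · refine IsCoprime.mul_left ?_ hcrs.symm
        have : Odd r := by rw [← hrs] at heo; exact (Int.odd_mul.1 heo).1
        exact (IsCoprime.pow_left (m := 3) (Int.isCoprime_two_left.2 this))
      · rw [mul_pow, hM]; ring
    · obtain rfl : d₂ = 1 := by omega
      push_cast at hM
      exact (no_sol_mod_three (m := M) hcrs.symm
        ⟨2 * s ^ 4 + 2 * s ^ 4 - s ^ 4 - 6 * r ^ 4, by linarith⟩).elim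
  · have huo : Odd u := by
      rw [hu]
      have hne : ¬ (Even M ∧ Even e) := fun ⟨h1, h2⟩ =>
        not_prime_dvd_both hMe Nat.prime_two (by exact_mod_cast h1.two_dvd)
          (by exact_mod_cast h2.two_dvd)
      rw [← Int.not_even_iff_odd] at *
      simp only [← Int.not_even_iff_odd] at hodd
      simp only [parity_simps]
      tauto
    obtain ⟨A, hA⟩ : Even (N - u) := by
      have : Even (N ^ 2) ↔ Even (u ^ 2) := by
        have h8 : Even (512 : ℤ) := by decide
        rw [hNu]; simp [h8, parity_simps]
      simp only [parity_simps] at this ⊢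
      simpa using this
    obtain ⟨B, hB⟩ : ∃ B, B = A + u := ⟨_, rfl⟩
    have hAB : A * B = (128 : ℕ) * e ^ 4 := by
      have h1 : N = A + B := by linarith
      have h2 : u = B - A := by linarith
      rw [h1, h2] at hNu
      push_cast
      linarith
    have hcop : IsCoprime A B := by
      refine isCoprime_of_no_prime fun p hp h1 h2 => ?_
      have hpi := Nat.prime_iff_prime_int.1 hp
      have hpu : (p : ℤ) ∣ u := by
        have : u = B - A := by linarith
        rw [this]; exact dvd_sub h2 h1
      have hp128 : (p : ℤ) ∣ (2 : ℕ) ^ 7 * e ^ 4 := by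
        have := hAB ▸ h1.mul_right B
        exact_mod_cast this
      rcases hpi.dvd_or_dvd hp128 with h3 | h3
      · have h4 : p ∣ 2 := by exact_mod_cast hpi.dvd_of_dvd_pow h3
        obtain rfl := (Nat.prime_dvd_prime_iff_eq hp Nat.prime_two).1 h4
        exact (Int.not_even_iff_odd.2 huo) (even_iff_two_dvd.2 (by exact_mod_cast hpu))
      · exact hMe2 p hp (hpi.dvd_of_dvd_pow h3) hpu
    obtain ⟨d₁, d₂, r, s, hd, hdc, hr, hs, hrs, rfl, rfl⟩ :=
      split_fourth (by linarith) (by linarith) he hcop hAB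
    have hcrs : IsCoprime r s := (IsCoprime.pow_iff (by norm_num) (by norm_num)).1
      (hcop.of_mul_left_right.of_mul_right_right)
    have hM : M ^ 2 = r ^ 2 * s ^ 2 + (d₂ * s ^ 4 - d₁ * r ^ 4) := by
      rw [← hrs] at hu; linarith
    have hd1 : d₁ ∈ Nat.divisors 128 := Nat.mem_divisors.2 ⟨⟨d₂, hd.symm⟩, by norm_num⟩
    rw [show Nat.divisors 128 = {1, 2, 4, 8, 16, 32, 64, 128} by decide +kernel] at hd1
    simp only [Finset.mem_insert, Finset.mem_singleton] at hd1
    have hd' : d₁ = 1 ∧ d₂ = 128 ∨ d₁ = 128 ∧ d₂ = 1 := by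
      rcases hd1 with rfl | rfl | rfl | rfl | rfl | rfl | rfl | rfl
      · left; omega
      · obtain rfl : d₂ = 64 := by omega
        norm_num at hdc
      · obtain rfl : d₂ = 32 := by omega
        norm_num at hdc
      · obtain rfl : d₂ = 16 := by omega
        norm_num at hdc
      · obtain rfl : d₂ = 8 := by omega
        norm_num at hdc
      · obtain rfl : d₂ = 4 := by omega
        norm_num at hdc
      · obtain rfl : d₂ = 2 := by omega
        norm_num at hdc
      · right; omega
    rcases hd' with ⟨rfl, rfl⟩ | ⟨rfl, rfl⟩
    · push_cast at hM
      exact (no_sol_mod_three (m := M) hcrs ⟨42 * s ^ 4, by linarith⟩).elim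
    · push_cast at hM
      have hso : Odd s := by
        have h1 : Odd (((1 : ℕ) : ℤ) * s ^ 4) := by
          have h2 : ((1 : ℕ) : ℤ) * s ^ 4 = u + 2 * (64 * r ^ 4) := by
            push_cast at hB ⊢; linarith
          rw [h2]; exact huo.add_even (even_two_mul _)
        simpa [parity_simps] using h1
      have hre : Even r := by
        by_contra hro
        rw [Int.not_even_iff_odd] at hro
        -- modulo 4, `M ^ 2 = 1 + 1`
        have h1 := Int.sq_mod_four_eq_one_of_odd (hro.mul hso)
        have h2 := Int.sq_mod_four_eq_one_of_odd (hso.pow (n := 2))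
        have h3 : M ^ 2 = (r * s) ^ 2 + (s ^ 2) ^ 2 - 4 * (32 * r ^ 4) := by rw [hM]; ring
        have h4 : M ^ 2 % 4 = 0 ∨ M ^ 2 % 4 = 1 := by
          rcases Int.even_or_odd M with hM' | hM'
          · left
            obtain ⟨m, rfl⟩ := hM'
            ring_nf; omega
          · right; exact Int.sq_mod_four_eq_one_of_odd hM'
        omega
      obtain ⟨c, rfl⟩ := hre
      refine ⟨s, c, M, ?_, by linarith, by rw [hM]; ring, Or.inl ⟨hso, by rw [← hrs]; ring⟩⟩
      exact hcrs.symm.of_isCoprime_of_dvd_right ⟨2, by ring⟩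

theorem eq_one_of_pos_of_dvd {r s : ℤ} (hr : 0 < r) (h : IsCoprime r s) (hd : r ∣ s) : r = 1 :=
  Int.eq_one_of_dvd_one hr.le ((h.isUnit_of_dvd hd).dvd)

/-! ### The infinite descent -/

/-- Descent on the denominator `e`, bounded by `n`; `M` and `e` need not be coprime. -/
theorem descent (n : ℕ) : ∀ M e N : ℤ, 0 < e → e ≤ n →
    N ^ 2 = M ^ 4 - 2 * M ^ 2 * e ^ 2 + 513 * e ^ 4 → M ^ 2 = 9 * e ^ 2 := by
  induction n with
  | zero => intro M e N h1 h2; norm_num at h2; omega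
  | succ n ih =>
    intro M e N he hen h
    by_cases hMe : IsCoprime M e
    swap
    -- a common prime factor can be cancelled
    · obtain ⟨p, hp, hpM, hpe⟩ : ∃ p : ℕ, p.Prime ∧ (p : ℤ) ∣ M ∧ (p : ℤ) ∣ e := by
        by_contra! hno
        exact hMe (isCoprime_of_no_prime fun p hp h1 h2 => hno p hp h1 h2)
      obtain ⟨M, rfl⟩ := hpM
      obtain ⟨e, rfl⟩ := hpe
      have hp2 : (2 : ℤ) ≤ p := by exact_mod_cast hp.two_le
      obtain ⟨N, rfl⟩ : (p : ℤ) ^ 2 ∣ N := by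
        have : ((p : ℤ) ^ 2) ^ 2 ∣ N ^ 2 :=
          ⟨M ^ 4 - 2 * M ^ 2 * e ^ 2 + 513 * e ^ 4, by rw [h]; ring⟩
        exact (Int.pow_dvd_pow_iff (by norm_num)).1 this
      have he' : 0 < e := pos_of_mul_pos_right he (by linarith)
      have := ih M e N he' (by push_cast at hen; nlinarith) (by
        have hp4 : (p : ℤ) ^ 4 ≠ 0 := by positivity
        apply mul_left_cancel₀ hp4
        linear_combination h)
      linear_combination (p : ℤ) ^ 2 * this
    obtain ⟨w, c, z, hwc, hc, hz, hcase⟩ := first_half hMe he h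
    obtain ⟨r, s, hr, hs, rfl, hrs, hw⟩ := second_half hwc hc hz
    have hsc : s ≤ r * s := by nlinarith
    -- either alternative is again a point of the original curve, with denominator `s`
    have hdesc : s < e → (w ^ 2 = 576 ∧ r = 3 ∧ s = 1) ∨ (w ^ 2 = 64 ∧ r = 1 ∧ s = 1) := by
      intro hse
      push_cast at hen
      rcases hw with hw | hw
      · have h9 := ih r s w hs (by linarith) hw
        have : r = 3 * s := by nlinarith
        have hs1 : s = 1 := eq_one_of_pos_of_dvd hs hrs.symm ⟨3, by linarith⟩
        subst hs1
        left; subst this; exact ⟨by rw [hw]; norm_num, by norm_num, rfl⟩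
      · have h9 := ih (3 * r) s (3 * w) hs (by linarith) (by linear_combination 9 * hw)
        have : r = s := by nlinarith
        have hs1 : s = 1 := eq_one_of_pos_of_dvd hs hrs.symm ⟨1, by linarith⟩
        subst hs1
        right; subst this; exact ⟨by rw [hw]; norm_num, rfl, rfl⟩
    rcases hcase with ⟨hwo, hew⟩ | ⟨b, hb, rfl, heb, rfl⟩
    -- `w` odd: the denominator drops, but neither `576` nor `64` is an odd square
    · have hw0 : 0 < w := by
        by_contra hn
        nlinarith
      have hw2 : Odd (w ^ 2) := hwo.pow
      rcases hdesc (by nlinarith) with ⟨h1, -⟩ | ⟨h1, -⟩ <;> rw [h1] at hw2 <;>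
        exact absurd hw2 (by decide)
    · have hfin : r = 1 → s = 1 → b = 1 → M ^ 2 = 9 * e ^ 2 := by
        rintro rfl rfl rfl
        rw [heb]; linarith
      by_cases hse : s < e
      · rcases hdesc hse with ⟨h1, rfl, rfl⟩ | ⟨h1, rfl, rfl⟩
        -- here `w = 24` is not prime to `c = 3`
        · have hb3 : b = 3 := by nlinarith
          subst hb3
          exact (not_prime_dvd_both hwc Nat.prime_three (by norm_num) (by norm_num)).elim
        · exact hfin rfl rfl (by nlinarith)
      -- the denominator does not drop: `e = b * r * s = s`
      · have hbr : b * r ≤ 1 := by nlinarith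
        have hb1 : b = 1 := by nlinarith
        have hr1 : r = 1 := by nlinarith
        subst hb1 hr1
        refine hfin rfl ?_ rfl
        rcases hw with hw | hw <;> nlinarith [sq_nonneg (s ^ 2 - 1), mul_pos hs hs]

/-! ### From the integral quartic to rational points -/

/-- The affine rational points of `E` have `X ∈ {0, 9, 57}`. -/
theorem weierstrass_points {X Y : ℚ} (h : Y ^ 2 = X * (X ^ 2 - 2 * X + 513)) :
    X = 0 ∨ X = 9 ∨ X = 57 := by
  obtain ⟨m, hm⟩ : ∃ m, m = X.num := ⟨_, rfl⟩
  obtain ⟨n, hn⟩ : ∃ n : ℤ, n = X.den := ⟨_, rfl⟩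
  have hn0 : 0 < n := by rw [hn]; exact_mod_cast X.den_pos
  have hnq : (n : ℚ) ≠ 0 := by exact_mod_cast hn0.ne'
  have hX : X = m / n := by rw [hm, hn]; exact_mod_cast (Rat.num_div_den X).symm
  have hcop : IsCoprime m n := by
    rw [hm, hn, Int.isCoprime_iff_gcd_eq_one]; exact X.reduced
  clear hm hn
  obtain ⟨Q, hQ⟩ : ∃ Q, Q = m ^ 2 - 2 * m * n + 513 * n ^ 2 := ⟨_, rfl⟩
  have hsq : IsSquare (n * (m * Q)) := by
    rw [← Rat.isSquare_intCast_iff]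
    refine ⟨Y * n ^ 2, ?_⟩
    rw [hX] at h
    have : Y * n ^ 2 * (Y * n ^ 2) = Y ^ 2 * (n : ℚ) ^ 4 := by ring
    rw [this, h, hQ]
    push_cast
    field_simp
  obtain ⟨Z, hZ⟩ := hsq
  rw [← sq] at hZ
  have hQpos : 0 < Q := by rw [hQ]; nlinarith [sq_nonneg (m - n)]
  rcases lt_trichotomy m 0 with hm | rfl | hm
  · have := mul_pos hn0 (mul_pos (neg_pos.2 hm) hQpos)
    nlinarith [sq_nonneg Z]
  · left; simpa using hX
  have hnQ : IsCoprime n Q := by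
    have : IsCoprime n (m ^ 2 + n * (-2 * m + 513 * n)) :=
      (hcop.symm.pow_right (n := 2)).add_mul_left_right _
    rw [hQ]; convert this using 1; ring
  -- the denominator is prime to the other factor, so both are squares
  obtain ⟨e, he⟩ : ∃ e, n = e ^ 2 := by
    obtain ⟨e, he | he⟩ := Int.sq_of_isCoprime (hcop.symm.mul_right hnQ) hZ
    · exact ⟨e, he⟩
    · nlinarith [sq_nonneg e]
  wlog hepos : 0 < e generalizing e
  · refine this (-e) (by rw [he]; ring) ?_
    rcases lt_trichotomy e 0 with h1 | rfl | h1
    · linarith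
    · norm_num at he; omega
    · exact absurd h1 hepos
  obtain ⟨W, hW⟩ : ∃ W, m * Q = W ^ 2 := by
    have : e ∣ Z := (Int.pow_dvd_pow_iff (n := 2) (by norm_num)).1
      ⟨m * Q, by rw [← hZ, he]⟩
    obtain ⟨W, rfl⟩ := this
    refine ⟨W, mul_left_cancel₀ hn0.ne' ?_⟩
    rw [hZ, he]; ring
  -- `d` is the class of `X` modulo rational squares
  obtain ⟨d, k, hdk, hdsf⟩ : ∃ (d : ℕ) (k : ℤ), m = d * k ^ 2 ∧ Squarefree d := by
    obtain ⟨d, k, h1, h2⟩ := Nat.sq_mul_squarefree m.toNat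
    refine ⟨d, k, ?_, h2⟩
    have : (m.toNat : ℤ) = m := Int.toNat_of_nonneg hm.le
    rw [← this, ← h1]; push_cast; ring
  wlog hkpos : 0 < k generalizing k
  · refine this (-k) (by rw [hdk]; ring) ?_
    rcases lt_trichotomy k 0 with h1 | rfl | h1
    · linarith
    · norm_num at hdk; omega
    · exact absurd h1 hkpos
  have hd0 : (d : ℤ) ≠ 0 := by exact_mod_cast hdsf.ne_zero
  obtain ⟨V, hV⟩ : ∃ V : ℤ, Q = d * V ^ 2 := by
    have : k ∣ W := (Int.pow_dvd_pow_iff (n := 2) (by norm_num)).1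
      ⟨d * Q, by rw [← hW, hdk]; ring⟩
    obtain ⟨W, rfl⟩ := this
    have h1 : d * Q = W ^ 2 := by
      have : k ^ 2 ≠ 0 := by positivity
      apply mul_left_cancel₀ this
      rw [hdk] at hW
      linear_combination hW
    have h2 : (d : ℤ) ∣ W :=
      ((Int.squarefree_natCast.2 hdsf).dvd_pow_iff_dvd (by norm_num)).1 ⟨Q, h1.symm⟩
    obtain ⟨V, rfl⟩ := h2
    refine ⟨V, mul_left_cancel₀ hd0 ?_⟩
    rw [h1]; ring
  have hd513 : d ∣ 513 := by
    have h1 : (d : ℤ) ∣ 513 * n ^ 2 := by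
      have : 513 * n ^ 2 = d * (V ^ 2 - k ^ 2 * m + 2 * k ^ 2 * n) := by
        linear_combination hV - hQ + (-m + 2 * n) * hdk
      exact ⟨_, this⟩
    have h2 : IsCoprime (d : ℤ) (n ^ 2) :=
      (hcop.of_isCoprime_of_dvd_left ⟨k ^ 2, hdk⟩).pow_right
    exact_mod_cast h2.dvd_of_dvd_mul_right h1
  have hke : IsCoprime k e := by
    rw [hdk, he] at hcop
    exact (IsCoprime.pow_iff (by norm_num) (by norm_num)).1 hcop.of_mul_left_right
  have hcurve : d * V ^ 2 = d ^ 2 * k ^ 4 - 2 * d * k ^ 2 * e ^ 2 + 513 * e ^ 4 := by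
    rw [← hV, hQ, hdk, he]; ring
  have hd1 : d ∈ Nat.divisors 513 := Nat.mem_divisors.2 ⟨hd513, by norm_num⟩
  rw [show Nat.divisors 513 = {1, 3, 9, 27, 19, 57, 171, 513} by decide +kernel] at hd1
  have hd9 : ¬ 3 * 3 ∣ d := fun h9 => by
    have := hdsf 3 h9
    norm_num at this
  simp only [Finset.mem_insert, Finset.mem_singleton] at hd1
  have heq : (e : ℚ) ≠ 0 := by exact_mod_cast hepos.ne'
  rcases hd1 with rfl | rfl | rfl | rfl | rfl | rfl | rfl | rfl <;> norm_num at hd9 <;>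
    push_cast at hcurve
  · have h9 := descent e.toNat k e V hepos (by omega) (by linarith)
    right; left
    rw [hX, hdk, he, h9]
    push_cast
    field_simp
  · exact (no_sol_mod_sixteen (n := V) hke ⟨10 * e ^ 4, by linarith⟩).elim
  · exact (no_sol_mod_sixteen (n := V) hke ⟨k ^ 4 + e ^ 4, by linarith⟩).elim
  -- `d = 57`: translating by `(0, 0)` exchanges the roles of `k` and `e`
  · have h9 := descent k.toNat (3 * e) k (3 * V) hkpos (by omega) (by linarith)
    have h1 : k ^ 2 = e ^ 2 := by linarith
    right; right
    rw [hX, hdk, he, h1]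
    push_cast
    field_simp

/-- The image of `(s, y)` on `E` is `(171 (1 + s) / (1 - s), 342 y / (1 - s)²)`. -/
theorem rational_points_on_quartic_aux {s y : ℚ}
    (h : y ^ 2 = -44 * s ^ 4 - 84 * s ^ 3 + s ^ 2 + 84 * s + 43) :
    s = 1 ∨ s = -1 ∨ s = -1/2 ∨ s = -9/10 := by
  by_cases hs : s = 1
  · exact Or.inl hs
  have hs' : 1 - s ≠ 0 := fun h0 => hs (by linarith)
  have hW : (342 * y / (1 - s) ^ 2) ^ 2 = (171 * (1 + s) / (1 - s)) *
      ((171 * (1 + s) / (1 - s)) ^ 2 - 2 * (171 * (1 + s) / (1 - s)) + 513) := by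
    field_simp
    rw [h]
    ring
  right
  rcases weierstrass_points hW with h1 | h1 | h1 <;> field_simp at h1
  · left; linarith
  · right; right; linarith
  · right; left; linarith

/-- The rational points on the genus-one curve `y² = -44x⁴ - 84x³ + x² + 84x + 43`:
the equation holds for `s, y ∈ ℚ` iff `(s, y)` is one of six explicit pairs.  In
particular, `43 + 84s + s² - 84s³ - 44s⁴` is a rational square iff
`s ∈ {1, -1, -1/2, -9/10}`. -/
theorem rational_points_on_quartic :
    (∀ s y : ℚ,
      y ^ 2 = -44 * s ^ 4 - 84 * s ^ 3 + s ^ 2 + 84 * s + 43 ↔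
        ((s, y) = (1, 0) ∨ (s, y) = (-1, 0) ∨ (s, y) = (-1/2, 3) ∨
         (s, y) = (-1/2, -3) ∨ (s, y) = (-9/10, 19/25) ∨ (s, y) = (-9/10, -19/25))) ∧
    (∀ s : ℚ,
      (∃ y : ℚ, y ^ 2 = 43 + 84 * s + s ^ 2 - 84 * s ^ 3 - 44 * s ^ 4) ↔
        (s = 1 ∨ s = -1 ∨ s = -1/2 ∨ s = -9/10)) := by
  refine ⟨fun s y => ⟨fun h => ?_, ?_⟩, fun s => ⟨fun ⟨y, hy⟩ => ?_, ?_⟩⟩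
  · rcases rational_points_on_quartic_aux h with rfl | rfl | rfl | rfl
    · left; norm_num at h; simp [h]
    · right; left; norm_num at h; simp [h]
    · have : (y - 3) * (y + 3) = 0 := by linarith
      rcases mul_eq_zero.1 this with h1 | h1
      · obtain rfl : y = 3 := by linarith
        simp
      · obtain rfl : y = -3 := by linarith
        simp
    · have : (y - 19/25) * (y + 19/25) = 0 := by linarith
      rcases mul_eq_zero.1 this with h1 | h1
      · obtain rfl : y = 19/25 := by linarith
        simp
      · obtain rfl : y = -19/25 := by linarith
        simp
  · simp only [Prod.mk.injEq]
    rintro (⟨rfl, rfl⟩ | ⟨rfl, rfl⟩ | ⟨rfl, rfl⟩ | ⟨rfl, rfl⟩ | ⟨rfl, rfl⟩ | ⟨rfl, rfl⟩) <;> norm_num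
  · exact rational_points_on_quartic_aux (y := y) (by linarith)
  · rintro (rfl | rfl | rfl | rfl)
    · exact ⟨0, by norm_num⟩
    · exact ⟨0, by norm_num⟩
    · exact ⟨3, by norm_num⟩
    · exact ⟨19/25, by norm_num⟩
end
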